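/- arXiv:math/0304045 — 8 statements merged into one kernel-verified Lean document; each statement's English description precedes it below -/
import Mathlib

section
/- Let T be a bounded linear operator on a complex Hilbert space K such that ⋂_{n≥0} Tⁿ(K) = {0}. Then for every nonzero x ∈ K, the closed disc {λ ∈ ℂ : |λ| ≤ r₁(T)} is contained in the local spectrum σ_T(x). -/
open Filter Topology ENNReal

noncomputable section

/-- The local resolvent set of `T` at `x`. -/
def localResolventSet {E : Type*} [NormedAddCommGroup E] [NormedSpace ℂ E]
    (T : E →L[ℂ] E) (x : E) : Set ℂ :=
  {l : ℂ | ∃ U : Set ℂ, IsOpen U ∧ l ∈ U ∧ ∃ f : ℂ → E, AnalyticOnNhd ℂ f U ∧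
    ∀ m ∈ U, T (f m) - m • f m = x}

/-- The local spectrum of `T` at `x`. -/
def localSpectrum {E : Type*} [NormedAddCommGroup E] [NormedSpace ℂ E]
    (T : E →L[ℂ] E) (x : E) : Set ℂ :=
  (localResolventSet T x)ᶜ

/-- The local spectral radius of `T` at `x`: `limsup ‖Tⁿx‖^{1/n}`. -/
def localSpecRad {E : Type*} [NormedAddCommGroup E] [NormedSpace ℂ E]
    (T : E →L[ℂ] E) (x : E) : ℝ≥0∞ :=
  limsup (fun n : ℕ => (‖(T ^ n) x‖₊ : ℝ≥0∞) ^ (1 / n : ℝ)) atTop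

/-- The lower bound `m(T) = inf {‖Tx‖ : ‖x‖ = 1}` of an operator. -/
def lowerBound {E : Type*} [NormedAddCommGroup E] [NormedSpace ℂ E]
    (T : E →L[ℂ] E) : ℝ :=
  sInf ((fun x => ‖T x‖) '' {x : E | ‖x‖ = 1})

/-- `r₁(T) = lim m(Tⁿ)^{1/n} = sup_{n ≥ 1} m(Tⁿ)^{1/n}`. -/
def r1 {E : Type*} [NormedAddCommGroup E] [NormedSpace ℂ E]
    (T : E →L[ℂ] E) : ℝ≥0∞ :=
  ⨆ n : ℕ, ENNReal.ofReal (lowerBound (T ^ (n + 1))) ^ (1 / (n + 1) : ℝ)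

/-- The point spectrum: the set of eigenvalues. -/
def pointSpectrum {E : Type*} [NormedAddCommGroup E] [NormedSpace ℂ E]
    (T : E →L[ℂ] E) : Set ℂ :=
  {l : ℂ | ∃ x : E, x ≠ 0 ∧ T x = l • x}

/-- The set of points where `T` fails the single-valued extension property. -/
def svepFails {E : Type*} [NormedAddCommGroup E] [NormedSpace ℂ E]
    (T : E →L[ℂ] E) : Set ℂ :=
  {l₀ : ℂ | ¬ ∀ r : ℝ, 0 < r → ∀ f : ℂ → E, AnalyticOnNhd ℂ f (Metric.ball l₀ r) →
      (∀ m ∈ Metric.ball l₀ r, T (f m) - m • f m = 0) →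
      ∀ m ∈ Metric.ball l₀ r, f m = 0}

/-- Dunford's condition (C). -/
def DunfordC {E : Type*} [NormedAddCommGroup E] [NormedSpace ℂ E]
    (T : E →L[ℂ] E) : Prop :=
  ∀ F : Set ℂ, IsClosed F → IsClosed {y : E | localSpectrum T y ⊆ F}

/-- Bishop's property (β). -/
def BishopBeta {E : Type*} [NormedAddCommGroup E] [NormedSpace ℂ E]
    (T : E →L[ℂ] E) : Prop :=
  ∀ U : Set ℂ, IsOpen U → ∀ f : ℕ → ℂ → E,
    (∀ m, AnalyticOnNhd ℂ (f m) U) →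
    TendstoLocallyUniformlyOn (fun m z => T (f m z) - z • f m z) 0 atTop U →
    TendstoLocallyUniformlyOn f 0 atTop U

section Shift

variable {H : Type*} [NormedAddCommGroup H] [InnerProductSpace ℂ H] [CompleteSpace H]

/-- `wB A n = B_n = A_{n-1} ⋯ A_1 A_0`, with `B_0 = 1`. -/
def wB (A : ℕ → (H →L[ℂ] H)ˣ) : ℕ → (H →L[ℂ] H)ˣ
  | 0 => 1
  | n + 1 => A n * wB A n

/-- `wBi A n = B_n⁻¹` as an operator. -/
def wBi (A : ℕ → (H →L[ℂ] H)ˣ) (n : ℕ) : H →L[ℂ] H :=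
  (((wB A n)⁻¹ : (H →L[ℂ] H)ˣ) : H →L[ℂ] H)

/-- `R₂⁺(S_u) = sup_{x ≠ 0} 1 / limsup ‖(B_n*)⁻¹ x‖^{1/n}` (with `1/0 = ∞`). -/
def R2plus (A : ℕ → (H →L[ℂ] H)ˣ) : ℝ≥0∞ :=
  ⨆ (x : H) (_ : x ≠ 0),
    (limsup (fun n : ℕ =>
      (‖ContinuousLinearMap.adjoint (wBi A n) x‖₊ : ℝ≥0∞) ^ (1 / n : ℝ)) atTop)⁻¹

/-- `R₂⁻(S_u) = inf_{x ≠ 0} 1 / limsup ‖(B_n*)⁻¹ x‖^{1/n}` (with `1/0 = ∞`). -/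
def R2minus (A : ℕ → (H →L[ℂ] H)ˣ) : ℝ≥0∞ :=
  ⨅ (x : H) (_ : x ≠ 0),
    (limsup (fun n : ℕ =>
      (‖ContinuousLinearMap.adjoint (wBi A n) x‖₊ : ℝ≥0∞) ^ (1 / n : ℝ)) atTop)⁻¹

/-- `R₃⁺(S_u) = sup_{x ≠ 0} limsup ‖B_n x‖^{1/n}`. -/
def R3plus (A : ℕ → (H →L[ℂ] H)ˣ) : ℝ≥0∞ :=
  ⨆ (x : H) (_ : x ≠ 0),
    limsup (fun n : ℕ => (‖(wB A n : H →L[ℂ] H) x‖₊ : ℝ≥0∞) ^ (1 / n : ℝ)) atTop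

/-- `R₃⁻(S_u) = inf_{x ≠ 0} limsup ‖B_n x‖^{1/n}`. -/
def R3minus (A : ℕ → (H →L[ℂ] H)ˣ) : ℝ≥0∞ :=
  ⨅ (x : H) (_ : x ≠ 0),
    limsup (fun n : ℕ => (‖(wB A n : H →L[ℂ] H) x‖₊ : ℝ≥0∞) ^ (1 / n : ℝ)) atTop

/-- `r₂(S_u) = 1 / limsup ‖B_n⁻¹‖^{1/n}` (with `1/0 = ∞`). -/
def r2 (A : ℕ → (H →L[ℂ] H)ˣ) : ℝ≥0∞ :=
  (limsup (fun n : ℕ => (‖wBi A n‖₊ : ℝ≥0∞) ^ (1 / n : ℝ)) atTop)⁻¹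

/-- `r₃(S_u) = 1 / liminf ‖B_n⁻¹‖^{1/n}` (with `1/0 = ∞`). -/
def r3 (A : ℕ → (H →L[ℂ] H)ˣ) : ℝ≥0∞ :=
  (liminf (fun n : ℕ => (‖wBi A n‖₊ : ℝ≥0∞) ^ (1 / n : ℝ)) atTop)⁻¹

/-- `R_𝒜(x) = 1 / limsup ‖B_n⁻¹ x_n‖^{1/n}` (with `1/0 = ∞`). -/
def RA (A : ℕ → (H →L[ℂ] H)ˣ) (x : lp (fun _ : ℕ => H) 2) : ℝ≥0∞ :=
  (limsup (fun n : ℕ => (‖wBi A n (x n)‖₊ : ℝ≥0∞) ^ (1 / n : ℝ)) atTop)⁻¹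

end Shift

section Helpers

variable {E : Type*} [NormedAddCommGroup E] [NormedSpace ℂ E]

theorem lrs_isOpen (T : E →L[ℂ] E) (x : E) : IsOpen (localResolventSet T x) := by
  rw [isOpen_iff_mem_nhds]
  rintro l ⟨U, hU, hl, f, hf⟩
  filter_upwards [hU.mem_nhds hl] with m hm
  exact ⟨U, hU, hm, f, hf⟩

theorem lrs_step [CompleteSpace E] (T : E →L[ℂ] E) (x : E) (l : ℂ)
    (h : l ∈ localResolventSet T x) :
    ∃ y, T y - l • y = x ∧ l ∈ localResolventSet T y := by
  obtain ⟨U, hU, hl, f, hf, hfx⟩ := h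
  have hd : DifferentiableOn ℂ (dslope f l) U :=
    (Complex.differentiableOn_dslope (hU.mem_nhds hl)).2 hf.differentiableOn
  refine ⟨f l, hfx l hl, U, hU, hl, dslope f l, hd.analyticOnNhd hU, ?_⟩
  have key : ∀ m ∈ U, m ≠ l → T (dslope f l m) - m • dslope f l m = f l := by
    intro m hm hml
    have h0 : m - l ≠ 0 := sub_ne_zero.2 hml
    have h1 : T (f m - f l) - m • (f m - f l) = (m - l) • f l := by
      have e1 := hfx m hm
      have e2 := hfx l hl
      rw [map_sub, smul_sub, sub_smul]
      have : T (f m) - T (f l) - (m • f m - m • f l)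
        = (T (f m) - m • f m) - (T (f l) - l • f l) + (m • f l - l • f l) := by abel
      rw [this, e1, e2]; simp
    rw [dslope_of_ne _ hml, slope_def_module, map_smul, smul_comm m, ← smul_sub, h1,
      smul_smul, inv_mul_cancel₀ h0, one_smul]
  intro m hm
  by_cases hml : m = l
  · subst hml
    have hc : ContinuousAt (dslope f m) m := (hd.continuousOn).continuousAt (hU.mem_nhds hl)
    have hc2 : ContinuousAt (fun z => T (dslope f m z) - z • dslope f m z) m := by
      fun_prop
    have t1 : Tendsto (fun z => T (dslope f m z) - z • dslope f m z) (𝓝[≠] m)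
        (𝓝 (T (dslope f m m) - m • dslope f m m)) := hc2.tendsto.mono_left nhdsWithin_le_nhds
    have t2 : Tendsto (fun z => T (dslope f m z) - z • dslope f m z) (𝓝[≠] m) (𝓝 (f m)) := by
      refine tendsto_const_nhds.congr' ?_
      filter_upwards [self_mem_nhdsWithin, nhdsWithin_le_nhds (hU.mem_nhds hl)] with z hz hz2
      exact (key z hz2 hz).symm
    exact tendsto_nhds_unique t1 t2
  · exact key m hm hml

theorem lrs_range [CompleteSpace E] (T : E →L[ℂ] E) (l : ℂ) (n : ℕ) : ∀ (x : E),
    l ∈ localResolventSet T x → ∃ y, ((T - l • (1 : E →L[ℂ] E)) ^ n) y = x := by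
  induction n with
  | zero => intro x _; exact ⟨x, by simp⟩
  | succ n ih =>
    intro x h
    obtain ⟨y, hy, hy2⟩ := lrs_step T x l h
    obtain ⟨z, hz⟩ := ih y hy2
    refine ⟨z, ?_⟩
    rw [pow_succ', mul_apply_eq_comp, hz, ← hy]
    simp

theorem lrs_ball [CompleteSpace E] (T : E →L[ℂ] E) (x : E) (l : ℂ) (c : ℝ) (hc : 0 < c)
    (hb : ∀ y, c * ‖y‖ ≤ ‖T y - l • y‖)
    (hr : ∀ n, ∃ y, ((T - l • (1 : E →L[ℂ] E)) ^ n) y = x) :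
    Metric.ball l c ⊆ localResolventSet T x := by
  intro z hz
  choose y hy using hr
  set S := T - l • (1 : E →L[ℂ] E) with hS
  have hSv : ∀ v, S v = T v - l • v := fun v => by simp [hS]
  have hbn : ∀ n v, c ^ n * ‖v‖ ≤ ‖(S ^ n) v‖ := by
    intro n
    induction n with
    | zero => intro v; simp
    | succ n ih =>
      intro v
      rw [pow_succ' S, mul_apply_eq_comp, hSv]
      refine le_trans ?_ (hb _)
      have := mul_le_mul_of_nonneg_left (ih v) hc.le
      calc _ = c * (c ^ n * ‖v‖) := by ring
        _ ≤ _ := this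
  have hyS : ∀ n, S (y (n + 1)) = y n := by
    intro n
    have h1 : (S ^ n) (S (y (n + 1)) - y n) = 0 := by
      rw [map_sub, hy n, ← mul_apply_eq_comp, ← pow_succ, hy (n + 1), sub_self]
    have h2 := hbn n (S (y (n + 1)) - y n)
    rw [h1, norm_zero] at h2
    have h3 : ‖S (y (n + 1)) - y n‖ ≤ 0 := by
      by_contra! h
      have := mul_pos (pow_pos hc n) h
      linarith
    exact sub_eq_zero.1 (norm_le_zero_iff.1 h3)
  have hyn : ∀ n, ‖y n‖ ≤ ‖x‖ / c ^ n := by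
    intro n
    rw [le_div_iff₀ (pow_pos hc n), mul_comm]
    have := hbn n (y n)
    rwa [hy n] at this
  have hy0 : y 0 = x := by simpa using hy 0
  obtain ⟨r, hzr, hrc⟩ := exists_between (Metric.mem_ball.1 hz)
  have hr0 : 0 < r := lt_of_le_of_lt dist_nonneg hzr
  have hu : Summable (fun n : ℕ => (r / c) ^ n * (‖x‖ / c)) :=
    (summable_geometric_of_lt_one (by positivity) ((div_lt_one hc).2 hrc)).mul_right _
  have hbd : ∀ (n : ℕ) (w : ℂ), w ∈ Metric.ball l r →
      ‖(w - l) ^ n • y (n + 1)‖ ≤ (r / c) ^ n * (‖x‖ / c) := by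
    intro n w hw
    rw [norm_smul, norm_pow]
    have h1 : ‖w - l‖ ^ n ≤ r ^ n :=
      pow_le_pow_left₀ (norm_nonneg _) (by rw [← dist_eq_norm]; exact (Metric.mem_ball.1 hw).le) n
    calc _ ≤ r ^ n * (‖x‖ / c ^ (n + 1)) :=
          mul_le_mul h1 (hyn _) (norm_nonneg _) (by positivity)
      _ = _ := by rw [div_pow, pow_succ]; field_simp
  refine ⟨Metric.ball l r, Metric.isOpen_ball, hzr,
    fun w => ∑' n : ℕ, (w - l) ^ n • y (n + 1), ?_, ?_⟩
  · refine DifferentiableOn.analyticOnNhd ?_ Metric.isOpen_ball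
    refine Complex.differentiableOn_tsum_of_summable_norm hu (fun n => ?_) Metric.isOpen_ball hbd
    fun_prop
  · intro w hw
    have hs : Summable (fun n : ℕ => (w - l) ^ n • y (n + 1)) :=
      Summable.of_norm_bounded hu (fun n => hbd n w hw)
    have h1 := hs.hasSum.mapL S
    simp only [map_smul, hyS] at h1
    have h2 : HasSum (fun n : ℕ => (w - l) ^ (n + 1) • y (n + 1))
        ((w - l) • ∑' n : ℕ, (w - l) ^ n • y (n + 1)) := by
      have := hs.hasSum.const_smul (w - l)
      simpa only [smul_smul, ← pow_succ'] using this
    have h3 := (hasSum_nat_add_iff (f := fun n : ℕ => (w - l) ^ n • y n) 1).1 h2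
    have h4 := h1.unique h3
    simp only [Finset.range_one, Finset.sum_singleton, pow_zero, one_smul, hy0, hSv] at h4
    show T (∑' n : ℕ, (w - l) ^ n • y (n + 1)) - w • (∑' n : ℕ, (w - l) ^ n • y (n + 1)) = x
    generalize (∑' n : ℕ, (w - l) ^ n • y (n + 1)) = F at *
    rw [sub_smul] at h4
    rw [sub_eq_iff_eq_add] at h4 ⊢
    rw [h4]; abel

theorem lowerBound_le (T : E →L[ℂ] E) (v : E) : lowerBound T * ‖v‖ ≤ ‖T v‖ := by
  by_cases hv : v = 0
  · simp [hv]
  have hn : 0 < ‖v‖ := norm_pos_iff.2 hv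
  have h : lowerBound T ≤ ‖T (((‖v‖⁻¹ : ℝ) : ℂ) • v)‖ := by
    refine csInf_le ⟨0, ?_⟩ ⟨_, ?_, rfl⟩
    · rintro _ ⟨w, _, rfl⟩; exact norm_nonneg _
    · simp [norm_smul, hn.ne']
  rw [map_smul, norm_smul] at h
  simp only [Complex.norm_real, norm_inv, norm_norm] at h
  rwa [inv_mul_eq_div, le_div_iff₀ hn] at h

theorem exists_bound (T : E →L[ℂ] E) (l : ℂ) (hl : (‖l‖₊ : ℝ≥0∞) < r1 T) :
    ∃ c : ℝ, 0 < c ∧ ∀ y, c * ‖y‖ ≤ ‖T y - l • y‖ := by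
  obtain ⟨n, hn⟩ := lt_iSup_iff.1 hl
  have hm : ‖l‖ ^ (n + 1) < lowerBound (T ^ (n + 1)) := by
    have h1 : (‖l‖₊ : ℝ≥0∞) ^ (n + 1) < ENNReal.ofReal (lowerBound (T ^ (n + 1))) := by
      have h2 := ENNReal.rpow_lt_rpow hn (z := ((n : ℝ) + 1)) (by positivity)
      rw [← ENNReal.rpow_mul, one_div_mul_cancel (by positivity), ENNReal.rpow_one] at h2
      rw [← ENNReal.rpow_natCast]
      exact_mod_cast h2
    have h3 : (‖l‖₊ : ℝ≥0∞) ^ (n + 1) = ENNReal.ofReal (‖l‖ ^ (n + 1)) := by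
      rw [ENNReal.ofReal_pow (norm_nonneg _), ofReal_norm]; rfl
    rw [h3] at h1
    exact (ENNReal.ofReal_lt_ofReal_iff_of_nonneg (by positivity)).1 h1
  obtain ⟨Q, hQ⟩ : ∃ Q : E →L[ℂ] E, Q * (T - l • (1 : E →L[ℂ] E))
      = T ^ (n + 1) - (l • (1 : E →L[ℂ] E)) ^ (n + 1) :=
    ⟨_, Commute.geom_sum₂_mul ((Commute.one_right T).smul_right l) _⟩
  refine ⟨(lowerBound (T ^ (n + 1)) - ‖l‖ ^ (n + 1)) / (‖Q‖ + 1),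
    div_pos (sub_pos.2 hm) (by positivity), fun y => ?_⟩
  rw [div_mul_eq_mul_div, div_le_iff₀ (by positivity)]
  have h1 : (T ^ (n + 1)) y - l ^ (n + 1) • y = Q (T y - l • y) := by
    have := congrArg (fun A : E →L[ℂ] E => A y) hQ.symm
    simpa [smul_pow] using this
  have h2 := lowerBound_le (T ^ (n + 1)) y
  have h3 : ‖(T ^ (n + 1)) y‖ - ‖l‖ ^ (n + 1) * ‖y‖ ≤ ‖Q (T y - l • y)‖ := by
    rw [← h1, ← norm_pow, ← norm_smul]; exact norm_sub_norm_le _ _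
  have h4 := Q.le_opNorm (T y - l • y)
  nlinarith [norm_nonneg (T y - l • y)]

end Helpers

theorem stmt0 {K : Type*} [NormedAddCommGroup K] [InnerProductSpace ℂ K] [CompleteSpace K]
    (T : K →L[ℂ] K)
    (hT : (⋂ n : ℕ, Set.range (⇑(T ^ n) : K → K)) = {0}) :
    ∀ x : K, x ≠ 0 → {l : ℂ | (‖l‖₊ : ℝ≥0∞) ≤ r1 T} ⊆ localSpectrum T x := by
  intro x hx l hl hlr
  have h0 : (0 : ℂ) ∉ localResolventSet T x := by
    intro h
    apply hx
    have : x ∈ (⋂ n : ℕ, Set.range (⇑(T ^ n) : K → K)) := by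
      refine Set.mem_iInter.2 fun n => ?_
      obtain ⟨y, hy⟩ := lrs_range T 0 n x h
      exact ⟨y, by simpa using hy⟩
    rw [hT] at this
    exact this
  by_cases hl0 : l = 0
  · exact h0 (hl0 ▸ hlr)
  have hpos : 0 < ‖l‖ := norm_pos_iff.2 hl0
  apply h0
  refine IsPreconnected.subset_of_closure_inter_subset (s := Metric.ball (0 : ℂ) ‖l‖)
    (convex_ball _ _).isPreconnected (lrs_isOpen T x) ?_ ?_ (Metric.mem_ball_self hpos)
  · have hcl : l ∈ closure (Metric.ball (0 : ℂ) ‖l‖) := by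
      rw [closure_ball _ hpos.ne']; simp
    obtain ⟨w, hw1, hw2⟩ := mem_closure_iff.1 hcl _ (lrs_isOpen T x) hlr
    exact ⟨w, hw2, hw1⟩
  · rintro w ⟨hw, hwb⟩
    have hw' : (‖w‖₊ : ℝ≥0∞) < r1 T := by
      refine lt_of_lt_of_le ?_ hl
      have : ‖w‖ < ‖l‖ := by simpa using hwb
      exact_mod_cast this
    obtain ⟨c, hc, hcb⟩ := exists_bound T w hw'
    obtain ⟨v, hv, hvd⟩ := Metric.mem_closure_iff.1 hw (c / 2) (by positivity)
    refine lrs_ball T x v (c / 2) (by positivity) (fun y => ?_) (fun n => lrs_range T v n x hv) hvd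
    have h1 := hcb y
    have h2 : ‖T y - w • y‖ ≤ ‖T y - v • y‖ + ‖(v - w) • y‖ := by
      refine le_trans (le_of_eq ?_) (norm_add_le _ _)
      rw [sub_smul]; congr 1; abel
    rw [norm_smul] at h2
    rw [dist_comm, dist_eq_norm] at hvd
    nlinarith [norm_nonneg y]
end
end

section
/- The set ℜ(S_u*) of points at which the adjoint S_u* fails to have the single-valued extension property equals the open disc {λ ∈ ℂ : |λ| < R₂⁺(S_u)}. In particular, S_u* has the single-valued extension property if and only if R₂⁺(S_u) = 0. -/
open Filter Topology ENNReal

noncomputable section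

section Helpers

variable {H : Type*} [NormedAddCommGroup H] [InnerProductSpace ℂ H] [CompleteSpace H]

theorem adj_coord (A : ℕ → (H →L[ℂ] H)ˣ)
    (S : lp (fun _ : ℕ => H) 2 →L[ℂ] lp (fun _ : ℕ => H) 2)
    (hS0 : ∀ x : lp (fun _ : ℕ => H) 2, S x 0 = 0)
    (hS : ∀ (x : lp (fun _ : ℕ => H) 2) (n : ℕ), S x (n + 1) = (A n : H →L[ℂ] H) (x n))
    (x : lp (fun _ : ℕ => H) 2) (n : ℕ) :
    (ContinuousLinearMap.adjoint S x) n
      = ContinuousLinearMap.adjoint (A n : H →L[ℂ] H) (x (n + 1)) := by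
  refine ext_inner_left ℂ fun y => ?_
  rw [ContinuousLinearMap.adjoint_inner_right]
  have h1 := lp.inner_single_left (𝕜 := ℂ) (G := fun _ : ℕ => H) n y
    (ContinuousLinearMap.adjoint S x)
  have h2 := lp.inner_single_left (𝕜 := ℂ) (G := fun _ : ℕ => H) (n + 1)
    ((A n : H →L[ℂ] H) y) x
  rw [← h1, ← h2, ContinuousLinearMap.adjoint_inner_right]
  congr 1
  ext k
  rcases k with _ | k
  · rw [hS0, lp.single_apply_ne _ _ _ (by omega)]
  · rw [hS]
    by_cases hk : k = n
    · subst hk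
      rw [lp.single_apply_self, lp.single_apply_self]
    · rw [lp.single_apply_ne _ _ _ hk, lp.single_apply_ne _ _ _ (by omega), map_zero]

theorem adj_wBi_succ (A : ℕ → (H →L[ℂ] H)ˣ) (n : ℕ) (x : H) :
    ContinuousLinearMap.adjoint (A n : H →L[ℂ] H)
      (ContinuousLinearMap.adjoint (wBi A (n + 1)) x)
      = ContinuousLinearMap.adjoint (wBi A n) x := by
  have h : wBi A n = (wBi A (n + 1)).comp (A n : H →L[ℂ] H) := by
    change _ = wBi A (n + 1) * (A n : H →L[ℂ] H)
    simp only [wBi, wB, ← Units.val_mul]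
    congr 1
    group
  rw [h, ContinuousLinearMap.adjoint_comp]
  rfl

theorem adj_inj (u : (H →L[ℂ] H)ˣ) {x y : H}
    (h : ContinuousLinearMap.adjoint (u : H →L[ℂ] H) x
      = ContinuousLinearMap.adjoint (u : H →L[ℂ] H) y) : x = y := by
  have key : ∀ z, ContinuousLinearMap.adjoint ((u⁻¹ : (H →L[ℂ] H)ˣ) : H →L[ℂ] H)
      (ContinuousLinearMap.adjoint (u : H →L[ℂ] H) z) = z := by
    intro z
    have : (u : H →L[ℂ] H).comp ((u⁻¹ : (H →L[ℂ] H)ˣ) : H →L[ℂ] H) = 1 := u.mul_inv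
    rw [← ContinuousLinearMap.comp_apply, ← ContinuousLinearMap.adjoint_comp, this]
    refine ext_inner_left ℂ fun y => ?_
    rw [ContinuousLinearMap.adjoint_inner_right]
    rfl
  rw [← key x, h, key]

/-- The power series of eigenvectors. -/
def eigSeries (A : ℕ → (H →L[ℂ] H)ˣ) (x : H) :
    FormalMultilinearSeries ℂ ℂ (lp (fun _ : ℕ => H) 2) :=
  fun n => ContinuousMultilinearMap.mkPiRing ℂ (Fin n)
    (lp.single 2 n (ContinuousLinearMap.adjoint (wBi A n) x))

theorem norm_eigSeries (A : ℕ → (H →L[ℂ] H)ˣ) (x : H) (n : ℕ) :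
    ‖eigSeries A x n‖ = ‖ContinuousLinearMap.adjoint (wBi A n) x‖ := by
  rw [eigSeries, ContinuousMultilinearMap.norm_mkPiRing, lp.norm_single (by norm_num)]

theorem radius_eigSeries (A : ℕ → (H →L[ℂ] H)ˣ) (x : H) :
    (limsup (fun n : ℕ =>
      (‖ContinuousLinearMap.adjoint (wBi A n) x‖₊ : ℝ≥0∞) ^ (1 / n : ℝ)) atTop)⁻¹
      = (eigSeries A x).radius := by
  rw [FormalMultilinearSeries.radius_eq_liminf, ENNReal.inv_limsup]
  congr 1
  ext n
  have : ‖eigSeries A x n‖₊ = ‖ContinuousLinearMap.adjoint (wBi A n) x‖₊ :=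
    NNReal.eq (norm_eigSeries A x n)
  rw [this, ENNReal.coe_rpow_of_nonneg _ (by positivity), one_div, one_div]

theorem eig_coord (A : ℕ → (H →L[ℂ] H)ˣ)
    (x : ℕ → H) (l : ℂ)
    (h : ∀ n, ContinuousLinearMap.adjoint (A n : H →L[ℂ] H) (x (n + 1)) = l • x n) (n : ℕ) :
    x n = l ^ n • ContinuousLinearMap.adjoint (wBi A n) (x 0) := by
  induction n with
  | zero =>
    refine ext_inner_left ℂ fun y => ?_
    simp [ContinuousLinearMap.adjoint_inner_right, wBi, wB]
  | succ n ih =>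
    apply adj_inj (A n)
    rw [h, map_smul, adj_wBi_succ, pow_succ', mul_smul, ← ih]

theorem sum_coord (A : ℕ → (H →L[ℂ] H)ˣ) (x : H) (l : ℂ)
    (hl : (‖l‖₊ : ℝ≥0∞) < (eigSeries A x).radius) (n : ℕ) :
    (eigSeries A x).sum l n = l ^ n • ContinuousLinearMap.adjoint (wBi A n) x := by
  have h := (eigSeries A x).hasSum (x := l) (by simpa [Metric.mem_eball, edist_zero_right, enorm_eq_nnnorm] using hl)
  have h2 := h.mapL (lp.evalCLM ℂ (fun _ : ℕ => H) 2 n)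
  refine h2.unique ?_
  have := hasSum_ite_eq n (l ^ n • ContinuousLinearMap.adjoint (wBi A n) x)
  convert! this using 2 with k
  change (eigSeries A x k fun _ => l) n = _
  rw [eigSeries, ContinuousMultilinearMap.mkPiRing_apply]
  simp only [Finset.prod_const, Finset.card_univ, Fintype.card_fin]
  change l ^ k • (lp.single (E := fun _ : ℕ => H) 2 k _) n = _
  split_ifs with hk
  · subst hk
    rw [lp.single_apply_self]
  · rw [lp.single_apply_ne _ _ _ (Ne.symm hk), smul_zero]

end Helpers

theorem stmt9 {H : Type*} [NormedAddCommGroup H] [InnerProductSpace ℂ H] [CompleteSpace H]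
    (A : ℕ → (H →L[ℂ] H)ˣ)
    (hbdd : ∃ C : ℝ, ∀ n, ‖(A n : H →L[ℂ] H)‖ ≤ C)
    (S : lp (fun _ : ℕ => H) 2 →L[ℂ] lp (fun _ : ℕ => H) 2)
    (hS0 : ∀ x : lp (fun _ : ℕ => H) 2, S x 0 = 0)
    (hS : ∀ (x : lp (fun _ : ℕ => H) 2) (n : ℕ), S x (n + 1) = (A n : H →L[ℂ] H) (x n)) :
    svepFails (ContinuousLinearMap.adjoint S) = {l : ℂ | (‖l‖₊ : ℝ≥0∞) < R2plus A} ∧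
    (svepFails (ContinuousLinearMap.adjoint S) = ∅ ↔ R2plus A = 0) := by
  have main : svepFails (ContinuousLinearMap.adjoint S)
      = {l : ℂ | (‖l‖₊ : ℝ≥0∞) < R2plus A} := by
    ext l₀
    simp only [svepFails, Set.mem_ofPred_eq, R2plus, radius_eigSeries, lt_iSup_iff]
    constructor
    · intro h
      push Not at h
      obtain ⟨r, hr, f, hf, hT, m, hm, hfm⟩ := h
      obtain ⟨l, hlb, hln, hl⟩ : ∃ l ∈ Metric.ball l₀ r, ‖l₀‖ < ‖l‖ ∧ f l ≠ 0 := by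
        by_contra! hcon
        obtain ⟨z, hz, hzn⟩ : ∃ z ∈ Metric.ball l₀ r, ‖l₀‖ < ‖z‖ := by
          by_cases h0 : l₀ = 0
          · subst h0
            refine ⟨((r / 2 : ℝ) : ℂ), ?_, ?_⟩
            · simp [abs_of_pos hr, hr]
            · simp [hr.ne']
          · have hp : 0 < ‖l₀‖ := norm_pos_iff.2 h0
            refine ⟨((1 + r / (2 * ‖l₀‖) : ℝ) : ℂ) * l₀, ?_, ?_⟩
            · rw [Metric.mem_ball, dist_eq_norm]
              have : ((1 + r / (2 * ‖l₀‖) : ℝ) : ℂ) * l₀ - l₀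
                  = ((r / (2 * ‖l₀‖) : ℝ) : ℂ) * l₀ := by push_cast; ring
              rw [this, norm_mul, Complex.norm_real, Real.norm_eq_abs, abs_of_pos (by positivity)]
              field_simp
              linarith
            · rw [norm_mul, Complex.norm_real, Real.norm_eq_abs, abs_of_pos (by positivity)]
              have : 0 < r / (2 * ‖l₀‖) * ‖l₀‖ := by positivity
              linarith
        have hev : f =ᶠ[𝓝 z] 0 := by
          filter_upwards [Metric.isOpen_ball.mem_nhds hz,
            (isOpen_lt continuous_const continuous_norm).mem_nhds hzn] with w hw1 hw2
          exact hcon w hw1 hw2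
        exact hfm (hf.eqOn_zero_of_preconnected_of_eventuallyEq_zero
          (convex_ball l₀ r).isPreconnected hz hev hm)
      have hrec : ∀ n, ContinuousLinearMap.adjoint (A n : H →L[ℂ] H) (f l (n + 1))
          = l • f l n := by
        intro n
        rw [← adj_coord A S hS0 hS, sub_eq_zero.1 (hT l hlb)]
        rfl
      have hc := eig_coord A (fun n => f l n) l hrec
      refine ⟨f l 0, ?_, ?_⟩
      · intro h0
        apply hl
        ext n
        have := hc n
        simp only [h0, map_zero, smul_zero] at this
        exact this
      · have hle : ((‖l‖₊ : NNReal) : ℝ≥0∞) ≤ (eigSeries A (f l 0)).radius := by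
          refine FormalMultilinearSeries.le_radius_of_bound _ ‖f l‖ fun n => ?_
          rw [norm_eigSeries]
          have h2 := lp.norm_apply_le_norm (by norm_num) (f l) n
          have h3 := hc n
          simp only at h3
          rw [h3, norm_smul, norm_pow, mul_comm] at h2
          exact h2
        refine lt_of_lt_of_le ?_ hle
        exact_mod_cast hln
    · rintro ⟨x, hx, hlt⟩ hcon
      have hpos : 0 < (eigSeries A x).radius := lt_of_le_of_lt zero_le hlt
      have hps := (eigSeries A x).hasFPowerSeriesOnBall hpos
      have hopen : IsOpen {l : ℂ | (‖l‖₊ : ℝ≥0∞) < (eigSeries A x).radius} :=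
        isOpen_lt (by fun_prop) continuous_const
      obtain ⟨r, hr, hsub⟩ := Metric.isOpen_iff.1 hopen l₀ hlt
      have h0 := hcon r hr (eigSeries A x).sum
        (fun z hz => hps.analyticAt_of_mem (by
          simpa [Metric.mem_eball, edist_zero_right, enorm_eq_nnnorm] using hsub hz)) (by
          intro z hz
          rw [sub_eq_zero]
          ext n
          rw [adj_coord A S hS0 hS, sum_coord A x z (hsub hz), map_smul, adj_wBi_succ]
          change _ = z • ((eigSeries A x).sum z n)
          rw [sum_coord A x z (hsub hz), smul_smul, pow_succ']) l₀ (Metric.mem_ball_self hr)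
      have h1 := sum_coord A x l₀ hlt 0
      rw [h0] at h1
      apply hx
      refine ext_inner_left ℂ fun y => ?_
      have h2 : ContinuousLinearMap.adjoint (wBi A 0) x = 0 := by simpa using h1.symm
      have h3 : inner ℂ y (ContinuousLinearMap.adjoint (wBi A 0) x) = inner ℂ y x := by
        simp [ContinuousLinearMap.adjoint_inner_right, wBi, wB]
      rw [← h3, h2]
  refine ⟨main, ?_⟩
  rw [main]
  constructor
  · intro h
    by_contra hne
    have : (0 : ℂ) ∈ {l : ℂ | (‖l‖₊ : ℝ≥0∞) < R2plus A} := by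
      simpa using pos_iff_ne_zero.2 hne
    rw [h] at this
    exact this
  · intro h
    ext l
    simp [h]
end
end

section
/- For every nonzero y ∈ Ĥ, the closed disc {λ ∈ ℂ : |λ| ≤ R₂⁻(S_u)} is contained in the local spectrum σ_{S_u}(y). In particular, if r(S_u) = R₂⁻(S_u), then S_u has fat local spectra: σ_{S_u}(y) = σ(S_u) for every nonzero y ∈ Ĥ. -/
open Filter Topology ENNReal

noncomputable section

lemma ps_zero (c : ℕ → ℂ) (r : NNReal) (C : ℝ) (h : ∀ᶠ n in atTop, ‖c n‖ * (r : ℝ) ^ n ≤ C)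
    (μ₀ : ℂ) (hμ₀ : ‖μ₀‖ < r)
    (hz : ∀ᶠ μ in 𝓝 μ₀, Tendsto (fun N => ∑ n ∈ Finset.range N, c n * μ ^ n) atTop (𝓝 0)) :
    ∀ n, c n = 0 := by
  set p : FormalMultilinearSeries ℂ ℂ ℂ := FormalMultilinearSeries.ofScalars ℂ c with hp
  have hr0 : 0 < (r : ℝ) := (norm_nonneg _).trans_lt hμ₀
  have hrad : (r : ℝ≥0∞) ≤ p.radius := by
    apply p.le_radius_of_eventually_le C
    filter_upwards [h] with n hn
    rwa [FormalMultilinearSeries.norm_apply_eq_norm_coef, FormalMultilinearSeries.coeff_ofScalars]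
  have hrpos : (0 : ℝ≥0∞) < r := by
    rw [ENNReal.coe_pos]; exact_mod_cast hr0
  have hps := (p.hasFPowerSeriesOnBall (hrpos.trans_le hrad)).mono hrpos hrad
  have han : AnalyticOnNhd ℂ p.sum (Metric.ball 0 (r : ℝ)) := by
    have := hps.analyticOnNhd
    rwa [Metric.eball_coe] at this
  have hev : p.sum =ᶠ[𝓝 μ₀] 0 := by
    have hin : ∀ᶠ μ in 𝓝 μ₀, μ ∈ Metric.ball (0 : ℂ) (r : ℝ) :=
      Metric.isOpen_ball.mem_nhds (by simpa using hμ₀)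
    filter_upwards [hz, hin] with μ h1 h2
    have h3 := (hps.hasSum (y := μ) (by rwa [Metric.eball_coe])).tendsto_sum_nat
    rw [zero_add] at h3
    refine tendsto_nhds_unique h3 ?_
    change Tendsto _ _ (𝓝 (0 : ℂ))
    convert h1 using 4 with N n
    rw [hp, FormalMultilinearSeries.ofScalars_apply_eq, smul_eq_mul]
  have hzero := han.eqOn_zero_of_preconnected_of_eventuallyEq_zero
    (convex_ball _ _).isPreconnected (by simpa using hμ₀) hev
  have hev0 : p.sum =ᶠ[𝓝 0] 0 :=
    hzero.eventuallyEq_of_mem (Metric.ball_mem_nhds _ hr0)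
  have hp0 : p = 0 := (hps.hasFPowerSeriesAt.congr hev0).eq_zero
  intro n
  have := FormalMultilinearSeries.coeff_ofScalars (𝕜 := ℂ) (p := c) (n := n)
  rw [← this, ← hp, hp0]
  simp [FormalMultilinearSeries.coeff]

section Aux

variable {H : Type*} [NormedAddCommGroup H] [InnerProductSpace ℂ H] [CompleteSpace H]

lemma wBi_succ_apply (A : ℕ → (H →L[ℂ] H)ˣ) (n : ℕ) (v : H) :
    wBi A (n + 1) ((A n : H →L[ℂ] H) v) = wBi A n v := by
  have : wBi A (n + 1) * (A n : H →L[ℂ] H) = wBi A n := by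
    simp [wBi, wB, mul_assoc]
  rw [← this]; rfl

lemma wBi_inj (A : ℕ → (H →L[ℂ] H)ˣ) (n : ℕ) (v : H) (h : wBi A n v = 0) : v = 0 := by
  have : (wB A n : H →L[ℂ] H) * wBi A n = 1 := by simp [wBi]
  have h2 : ((wB A n : H →L[ℂ] H) * wBi A n) v = v := by rw [this]; rfl
  rw [← h2, ContinuousLinearMap.mul_apply, h, map_zero]

lemma growth (A : ℕ → (H →L[ℂ] H)ˣ) (r : NNReal) (hr : (r : ℝ≥0∞) < R2minus A) (hr0 : 0 < r)
    (x : H) (hx : x ≠ 0) :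
    ∀ᶠ n in atTop, ‖ContinuousLinearMap.adjoint (wBi A n) x‖ * (r : ℝ) ^ n ≤ 1 := by
  have h1 := hr.trans_le (iInf₂_le (f := fun (x : H) (_ : x ≠ 0) => (limsup (fun n : ℕ =>
      (‖ContinuousLinearMap.adjoint (wBi A n) x‖₊ : ℝ≥0∞) ^ (1 / n : ℝ)) atTop)⁻¹) x hx)
  have h2 := ENNReal.lt_inv_iff_lt_inv.1 h1
  filter_upwards [eventually_lt_of_limsup_lt h2, eventually_gt_atTop 0] with n hn hn0
  set a := ‖ContinuousLinearMap.adjoint (wBi A n) x‖₊ with ha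
  have hn0' : (0 : ℝ) < n := by exact_mod_cast hn0
  have h3 : (a : ℝ≥0∞) ≤ ((r : ℝ≥0∞)⁻¹) ^ n := by
    have := ENNReal.rpow_le_rpow hn.le hn0'.le
    rwa [← ENNReal.rpow_mul, one_div, inv_mul_cancel₀ hn0'.ne', ENNReal.rpow_one,
      ENNReal.rpow_natCast] at this
  rw [← ENNReal.coe_inv hr0.ne'] at h3
  have h4 : a ≤ r⁻¹ ^ n := by exact_mod_cast h3
  have h5 : a * r ^ n ≤ 1 := by
    calc a * r ^ n ≤ r⁻¹ ^ n * r ^ n := by gcongr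
      _ = 1 := by rw [← mul_pow, inv_mul_cancel₀ hr0.ne', one_pow]
  exact_mod_cast h5

lemma telescope (A : ℕ → (H →L[ℂ] H)ˣ) (f y : ℕ → H) (μ : ℂ) (h0 : - (μ • f 0) = y 0)
    (hs : ∀ n, (A n : H →L[ℂ] H) (f n) - μ • f (n + 1) = y (n + 1)) (N : ℕ) :
    ∑ n ∈ Finset.range (N + 1), μ ^ n • wBi A n (y n) = - (μ ^ (N + 1) • wBi A N (f N)) := by
  induction N with
  | zero => simp [← h0]
  | succ N ih =>
    rw [Finset.sum_range_succ, ih, ← hs, map_sub, wBi_succ_apply, map_smul, smul_sub, smul_smul,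
      ← pow_succ]
    abel

lemma part_pos (A : ℕ → (H →L[ℂ] H)ˣ)
    (S : lp (fun _ : ℕ => H) 2 →L[ℂ] lp (fun _ : ℕ => H) 2)
    (hS0 : ∀ x : lp (fun _ : ℕ => H) 2, S x 0 = 0)
    (hS : ∀ (x : lp (fun _ : ℕ => H) 2) (n : ℕ), S x (n + 1) = (A n : H →L[ℂ] H) (x n))
    (y : lp (fun _ : ℕ => H) 2) (U : Set ℂ) (hU : IsOpen U) (f : ℂ → lp (fun _ : ℕ => H) 2)
    (hf : ∀ m ∈ U, S (f m) - m • f m = y) (μ₀ : ℂ) (hμ₀ : μ₀ ∈ U)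
    (hR : (‖μ₀‖₊ : ℝ≥0∞) < R2minus A) : y = 0 := by
  obtain ⟨r, hr1, hr2⟩ := ENNReal.lt_iff_exists_nnreal_btwn.1 hR
  have hr1' : ‖μ₀‖₊ < r := by exact_mod_cast hr1
  have hr0 : 0 < r := lt_of_le_of_lt bot_le hr1'
  have hr0' : (0 : ℝ) < r := by exact_mod_cast hr0
  have key : ∀ x : H, x ≠ 0 → ∀ n, inner ℂ x (wBi A n (y n)) = 0 := by
    intro x hx
    have hg := growth A r hr2 hr0 x hx
    apply ps_zero (fun n => inner ℂ x (wBi A n (y n))) r ‖y‖ _ μ₀ (by exact_mod_cast hr1')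
    · have hin : ∀ᶠ μ in 𝓝 μ₀, μ ∈ Metric.ball (0 : ℂ) (r : ℝ) :=
        Metric.isOpen_ball.mem_nhds (by simpa using (show ‖μ₀‖ < r by exact_mod_cast hr1'))
      filter_upwards [hU.mem_nhds hμ₀, hin] with μ hμ hμr
      have hμr' : ‖μ‖ < r := by simpa using hμr
      have ht : ∀ N, ∑ n ∈ Finset.range (N + 1), inner ℂ x (wBi A n (y n)) * μ ^ n =
          - (μ ^ (N + 1) * inner ℂ (ContinuousLinearMap.adjoint (wBi A N) x) (f μ N)) := by
        intro N
        have h0 : - (μ • f μ 0) = y 0 := by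
          have : S (f μ) 0 - μ • f μ 0 = y 0 :=
            congrArg (fun z : lp (fun _ : ℕ => H) 2 => z 0) (hf μ hμ)
          simpa [hS0] using this
        have hs : ∀ n, (A n : H →L[ℂ] H) (f μ n) - μ • f μ (n + 1) = y (n + 1) := by
          intro n
          have : S (f μ) (n + 1) - μ • f μ (n + 1) = y (n + 1) :=
            congrArg (fun z : lp (fun _ : ℕ => H) 2 => z (n + 1)) (hf μ hμ)
          simpa [hS] using this
        have := congrArg (fun v => inner ℂ x v) (telescope A (fun n => f μ n) (fun n => y n) μ h0 hs N)
        simp only [inner_sum, inner_smul_right, inner_neg_right] at this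
        rw [ContinuousLinearMap.adjoint_inner_left, ← this]
        exact Finset.sum_congr rfl fun n _ => mul_comm _ _
      rw [← tendsto_add_atTop_iff_nat 1]
      simp_rw [ht]
      rw [← neg_zero]
      refine Tendsto.neg ?_
      have hlim : Tendsto (fun N : ℕ => (‖μ‖ * ‖f μ‖) * (‖μ‖ / r) ^ N) atTop (𝓝 0) := by
        have := (tendsto_pow_atTop_nhds_zero_of_lt_one (r := ‖μ‖ / r) (by positivity)
          ((div_lt_one hr0').2 hμr')).const_mul (‖μ‖ * ‖f μ‖)
        simpa using this
      refine squeeze_zero_norm' ?_ hlim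
      filter_upwards [hg] with N hN
      have hb : ‖f μ N‖ ≤ ‖f μ‖ := lp.norm_apply_le_norm (by norm_num) _ _
      have ha : ‖ContinuousLinearMap.adjoint (wBi A N) x‖ ≤ 1 / (r : ℝ) ^ N := by
        rwa [le_div_iff₀ (by positivity)]
      calc ‖μ ^ (N + 1) * inner ℂ (ContinuousLinearMap.adjoint (wBi A N) x) (f μ N)‖
          ≤ ‖μ‖ ^ (N + 1) * (‖ContinuousLinearMap.adjoint (wBi A N) x‖ * ‖f μ N‖) := by
            rw [norm_mul, norm_pow]
            gcongr
            exact norm_inner_le_norm _ _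
        _ ≤ ‖μ‖ ^ (N + 1) * (1 / (r : ℝ) ^ N * ‖f μ‖) := by gcongr
        _ = (‖μ‖ * ‖f μ‖) * (‖μ‖ / r) ^ N := by
            rw [div_pow, pow_succ]; ring
    · filter_upwards [hg] with n hn
      have hb : ‖y n‖ ≤ ‖y‖ := lp.norm_apply_le_norm (by norm_num) _ _
      rw [← ContinuousLinearMap.adjoint_inner_left]
      calc ‖inner ℂ (ContinuousLinearMap.adjoint (wBi A n) x) (y n)‖ * (r : ℝ) ^ n
          ≤ (‖ContinuousLinearMap.adjoint (wBi A n) x‖ * ‖y n‖) * (r : ℝ) ^ n := by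
            gcongr
            exact norm_inner_le_norm _ _
        _ = (‖ContinuousLinearMap.adjoint (wBi A n) x‖ * (r : ℝ) ^ n) * ‖y n‖ := by ring
        _ ≤ 1 * ‖y‖ := by gcongr
        _ = ‖y‖ := one_mul _
  ext n
  by_contra hne
  have hne' : wBi A n (y n) ≠ 0 := fun h => hne (by simpa using wBi_inj A n _ h)
  exact hne' (inner_self_eq_zero.1 (key _ hne' n))

lemma cont_zero (U : Set ℂ) (hU : IsOpen U) (h0 : (0 : ℂ) ∈ U) (g : ℂ → H) (hg : ContinuousOn g U)
    (v : H) (h : ∀ m ∈ U, - (m • g m) = v) : v = 0 ∧ ∀ m ∈ U, g m = 0 := by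
  have hv : v = 0 := by simpa using (h 0 h0).symm
  subst hv
  have hne : ∀ m ∈ U, m ≠ 0 → g m = 0 := fun m hm hm0 => by
    have := h m hm
    rw [neg_eq_zero, smul_eq_zero] at this
    exact this.resolve_left hm0
  refine ⟨rfl, fun m hm => ?_⟩
  by_cases hm0 : m = 0
  · subst hm0
    have h1 : Tendsto g (𝓝[≠] 0) (𝓝 (g 0)) :=
      ((hg.continuousAt (hU.mem_nhds h0)).tendsto).mono_left nhdsWithin_le_nhds
    refine tendsto_nhds_unique h1 (tendsto_const_nhds.congr' ?_)
    filter_upwards [self_mem_nhdsWithin, nhdsWithin_le_nhds (hU.mem_nhds h0)] with m hm hmU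
    exact (hne m hmU hm).symm
  · exact hne m hm hm0

lemma part_zero (A : ℕ → (H →L[ℂ] H)ˣ)
    (S : lp (fun _ : ℕ => H) 2 →L[ℂ] lp (fun _ : ℕ => H) 2)
    (hS0 : ∀ x : lp (fun _ : ℕ => H) 2, S x 0 = 0)
    (hS : ∀ (x : lp (fun _ : ℕ => H) 2) (n : ℕ), S x (n + 1) = (A n : H →L[ℂ] H) (x n))
    (y : lp (fun _ : ℕ => H) 2) (U : Set ℂ) (hU : IsOpen U) (f : ℂ → lp (fun _ : ℕ => H) 2)
    (hfc : ContinuousOn f U)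
    (hf : ∀ m ∈ U, S (f m) - m • f m = y) (h0 : (0 : ℂ) ∈ U) : y = 0 := by
  have hc : ∀ n, ContinuousOn (fun m => f m n) U := fun n =>
    (lp.evalCLM ℂ (fun _ : ℕ => H) 2 n).continuous.comp_continuousOn hfc
  have key : ∀ n, y n = 0 ∧ ∀ m ∈ U, f m n = 0 := by
    intro n
    induction n with
    | zero =>
      refine cont_zero U hU h0 _ (hc 0) _ fun m hm => ?_
      have : S (f m) 0 - m • f m 0 = y 0 :=
            congrArg (fun z : lp (fun _ : ℕ => H) 2 => z 0) (hf m hm)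
      simpa [hS0] using this
    | succ n ih =>
      refine cont_zero U hU h0 _ (hc (n + 1)) _ fun m hm => ?_
      have : S (f m) (n + 1) - m • f m (n + 1) = y (n + 1) :=
            congrArg (fun z : lp (fun _ : ℕ => H) 2 => z (n + 1)) (hf m hm)
      simpa [hS, ih.2 m hm] using this
  ext n
  simpa using (key n).1

end Aux

lemma localSpectrum_subset_spectrum {E : Type*} [NormedAddCommGroup E] [NormedSpace ℂ E]
    [CompleteSpace E] (T : E →L[ℂ] E) (y : E) : localSpectrum T y ⊆ spectrum ℂ T := by
  rw [localSpectrum, spectrum, Set.compl_subset_compl]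
  intro l hl
  refine ⟨resolventSet ℂ T, spectrum.isOpen_resolventSet T, hl,
    fun m => - (resolvent T m) y, ?_, ?_⟩
  · refine DifferentiableOn.analyticOnNhd (fun m hm => ?_) (spectrum.isOpen_resolventSet T)
    have h1 := (spectrum.hasDerivAt_resolvent_const_left hm).differentiableAt
    exact ((h1.clm_apply (differentiableAt_const y)).neg).differentiableWithinAt
  · intro m hm
    have h1 : (algebraMap ℂ (E →L[ℂ] E) m - T) * resolvent T m = 1 := Ring.mul_inverse_cancel _ hm
    have h2 := congrArg (fun R : E →L[ℂ] E => R y) h1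
    simp [Algebra.algebraMap_eq_smul_one] at h2
    simp only [map_neg, smul_neg]
    refine Eq.trans ?_ h2
    abel

theorem stmt10 {H : Type*} [NormedAddCommGroup H] [InnerProductSpace ℂ H] [CompleteSpace H]
    (A : ℕ → (H →L[ℂ] H)ˣ)
    (hbdd : ∃ C : ℝ, ∀ n, ‖(A n : H →L[ℂ] H)‖ ≤ C)
    (S : lp (fun _ : ℕ => H) 2 →L[ℂ] lp (fun _ : ℕ => H) 2)
    (hS0 : ∀ x : lp (fun _ : ℕ => H) 2, S x 0 = 0)
    (hS : ∀ (x : lp (fun _ : ℕ => H) 2) (n : ℕ), S x (n + 1) = (A n : H →L[ℂ] H) (x n)) :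
    (∀ y : lp (fun _ : ℕ => H) 2, y ≠ 0 →
      {l : ℂ | (‖l‖₊ : ℝ≥0∞) ≤ R2minus A} ⊆ localSpectrum S y) ∧
    (spectralRadius ℂ S = R2minus A →
      ∀ y : lp (fun _ : ℕ => H) 2, y ≠ 0 → localSpectrum S y = spectrum ℂ S) := by
  have main : ∀ y : lp (fun _ : ℕ => H) 2, y ≠ 0 →
      {l : ℂ | (‖l‖₊ : ℝ≥0∞) ≤ R2minus A} ⊆ localSpectrum S y := by
    rintro y hy l hl ⟨U, hU, hlU, f, hfa, hf⟩
    have hl' : (‖l‖₊ : ℝ≥0∞) ≤ R2minus A := hl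
    by_cases hl0 : l = 0
    · subst hl0
      exact hy (part_zero A S hS0 hS y U hU f hfa.continuousOn hf hlU)
    · have ht : Tendsto (fun t : ℝ => (t : ℂ) * l) (𝓝[<] 1) (𝓝 l) := by
        have : Continuous (fun t : ℝ => (t : ℂ) * l) := by fun_prop
        have := this.tendsto 1
        simp only [Complex.ofReal_one, one_mul] at this
        exact this.mono_left nhdsWithin_le_nhds
      have h1 := ht.eventually (hU.mem_nhds hlU)
      have h2 : ∀ᶠ t : ℝ in 𝓝[<] 1, 0 < t :=
        nhdsWithin_le_nhds (lt_mem_nhds (by norm_num))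
      obtain ⟨t, ⟨htU, ht0⟩, ht1⟩ := ((h1.and h2).and self_mem_nhdsWithin).exists
      have ht1' : t < 1 := ht1
      refine hy (part_pos A S hS0 hS y U hU f hf _ htU (lt_of_lt_of_le ?_ hl'))
      rw [ENNReal.coe_lt_coe, ← NNReal.coe_lt_coe, coe_nnnorm, coe_nnnorm, norm_mul,
        Complex.norm_real, Real.norm_of_nonneg ht0.le]
      have := norm_pos_iff.2 hl0
      nlinarith
  refine ⟨main, fun hr y hy => Set.Subset.antisymm (localSpectrum_subset_spectrum S y) ?_⟩
  intro l hl
  apply main y hy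
  show (‖l‖₊ : ℝ≥0∞) ≤ R2minus A
  rw [← hr]
  exact le_iSup₂ (f := fun (k : ℂ) (_ : k ∈ spectrum ℂ S) => (‖k‖₊ : ℝ≥0∞)) l hl
end
end

section
/- For every nonzero x ∈ Ĥ, the local spectral radius of S_u at x satisfies R₃⁻(S_u) ≤ r_{S_u}(x) ≤ r(S_u). -/
open Filter Topology ENNReal

noncomputable section

theorem shift_pow_apply {H : Type*} [NormedAddCommGroup H] [InnerProductSpace ℂ H] [CompleteSpace H]
    (A : ℕ → (H →L[ℂ] H)ˣ)
    (S : lp (fun _ : ℕ => H) 2 →L[ℂ] lp (fun _ : ℕ => H) 2)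
    (hS : ∀ (x : lp (fun _ : ℕ => H) 2) (n : ℕ), S x (n + 1) = (A n : H →L[ℂ] H) (x n))
    (x : lp (fun _ : ℕ => H) 2) (k : ℕ) (y : H) (hy : (wB A k : H →L[ℂ] H) y = x k) (n : ℕ) :
    ((S ^ n) x) (n + k) = (wB A (n + k) : H →L[ℂ] H) y := by
  induction n with
  | zero => simp [hy]
  | succ n ih =>
    have e : n + 1 + k = (n + k) + 1 := by omega
    rw [e, pow_succ']
    change S ((S ^ n) x) (n + k + 1) = _
    rw [hS, ih]
    simp [wB]

theorem limsup_shift_aux (b : ℕ → ℝ≥0∞) (k : ℕ) :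
    limsup (fun n : ℕ => b n ^ (1 / n : ℝ)) atTop
      ≤ limsup (fun n : ℕ => b (n + k) ^ (1 / n : ℝ)) atTop := by
  rw [← limsup_nat_add (fun n : ℕ => b n ^ (1 / n : ℝ)) k]
  refine le_of_forall_gt_imp_ge_of_dense fun c hc => ?_
  rcases eq_or_ne c ⊤ with rfl | hct
  · exact le_top
  have hc0 : c ≠ 0 := (lt_of_le_of_lt bot_le hc).ne'
  lift c to NNReal using hct
  have hc0' : c ≠ 0 := by simpa using hc0
  have hlim : Tendsto (fun n : ℕ => ((c : ℝ≥0∞)) ^ ((n : ℝ) / (n + k))) atTop (𝓝 (c : ℝ≥0∞)) := by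
    have h1 : Tendsto (fun n : ℕ => (n : ℝ) / (n + k)) atTop (𝓝 1) :=
      tendsto_natCast_div_add_atTop (k : ℝ)
    have h2 : Tendsto (fun n : ℕ => c ^ ((n : ℝ) / (n + k))) atTop (𝓝 (c ^ (1 : ℝ))) :=
      tendsto_const_nhds.nnrpow h1 (Or.inl hc0')
    rw [NNReal.rpow_one] at h2
    have h3 := ENNReal.tendsto_coe.2 h2
    refine h3.congr fun n => ?_
    rw [ENNReal.coe_rpow_of_ne_zero hc0']
  rw [← hlim.limsup_eq]
  refine limsup_le_limsup ?_
  filter_upwards [eventually_lt_of_limsup_lt hc, eventually_gt_atTop 0] with n hn hn0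
  have hnr : (0 : ℝ) < n := by exact_mod_cast hn0
  have hb : b (n + k) ≤ (c : ℝ≥0∞) ^ (n : ℝ) := by
    have := ENNReal.rpow_le_rpow hn.le hnr.le
    rwa [← ENNReal.rpow_mul, one_div, inv_mul_cancel₀ hnr.ne', ENNReal.rpow_one] at this
  have hp : (0 : ℝ) ≤ 1 / ((n + k : ℕ) : ℝ) := by positivity
  refine (ENNReal.rpow_le_rpow hb hp).trans (le_of_eq ?_)
  rw [← ENNReal.rpow_mul]
  congr 1
  push_cast
  ring

theorem stmt11 {H : Type*} [NormedAddCommGroup H] [InnerProductSpace ℂ H] [CompleteSpace H]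
    (A : ℕ → (H →L[ℂ] H)ˣ)
    (hbdd : ∃ C : ℝ, ∀ n, ‖(A n : H →L[ℂ] H)‖ ≤ C)
    (S : lp (fun _ : ℕ => H) 2 →L[ℂ] lp (fun _ : ℕ => H) 2)
    (hS0 : ∀ x : lp (fun _ : ℕ => H) 2, S x 0 = 0)
    (hS : ∀ (x : lp (fun _ : ℕ => H) 2) (n : ℕ), S x (n + 1) = (A n : H →L[ℂ] H) (x n)) :
    ∀ x : lp (fun _ : ℕ => H) 2, x ≠ 0 →
      R3minus A ≤ localSpecRad S x ∧ localSpecRad S x ≤ spectralRadius ℂ S := by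
  intro x hx
  constructor
  · obtain ⟨k, hk⟩ : ∃ k, x k ≠ 0 := by
      by_contra! h
      exact hx (lp.ext (funext h))
    set y : H := wBi A k (x k) with hydef
    have hy : (wB A k : H →L[ℂ] H) y = x k := by
      have := DFunLike.congr_fun (Units.mul_inv (wB A k)) (x k)
      exact this
    have hy0 : y ≠ 0 := by
      intro h
      rw [h, map_zero] at hy
      exact hk hy.symm
    refine (iInf₂_le y hy0).trans ?_
    refine (limsup_shift_aux _ k).trans ?_
    refine limsup_le_limsup (Eventually.of_forall fun n => ?_)
    refine ENNReal.rpow_le_rpow ?_ (by positivity)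
    rw [ENNReal.coe_le_coe, ← shift_pow_apply A S hS x k y hy n]
    exact lp.norm_apply_le_norm (by norm_num) ((S ^ n) x) (n + k)
  · have h1 := spectrum.pow_nnnorm_pow_one_div_tendsto_nhds_spectralRadius S
    have hx' : ‖x‖₊ ≠ 0 := by simpa using hx
    have h2 : Tendsto (fun n : ℕ => (‖x‖₊ : ℝ≥0∞) ^ (1 / n : ℝ)) atTop (𝓝 1) := by
      have h3 : Tendsto (fun n : ℕ => ‖x‖₊ ^ (1 / n : ℝ)) atTop (𝓝 (‖x‖₊ ^ (0 : ℝ))) :=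
        tendsto_const_nhds.nnrpow tendsto_one_div_atTop_nhds_zero_nat (Or.inl hx')
      rw [NNReal.rpow_zero] at h3
      refine (ENNReal.tendsto_coe.2 h3).congr fun n => ?_
      rw [ENNReal.coe_rpow_of_ne_zero hx']
    have h4 := ENNReal.Tendsto.mul h1 (Or.inr ENNReal.one_ne_top) h2 (Or.inl one_ne_zero)
    rw [mul_one] at h4
    rw [← h4.limsup_eq]
    refine limsup_le_limsup (Eventually.of_forall fun n => ?_)
    have hp : (0 : ℝ) ≤ 1 / (n : ℝ) := by positivity
    simp only
    rw [← ENNReal.mul_rpow_of_nonneg _ _ hp]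
    refine ENNReal.rpow_le_rpow ?_ hp
    exact_mod_cast (S ^ n).le_opNNNorm x
end
end

section
/- Let x = (x_0, x_1, ...) be a nonzero finitely supported element of Ĥ (i.e. x_k = 0 for all but finitely many k). Then R₃⁻(S_u) ≤ r_{S_u}(x) = max_{k≥0} r_{S_u}(x_k^{(k)}) ≤ R₃⁺(S_u). -/
open Filter Topology ENNReal

noncomputable section

theorem aux_tendsto (r : NNReal) (hr : r ≠ 0) (e : ℕ → ℝ) (l : ℝ) (he : Tendsto e atTop (𝓝 l)) :
    Tendsto (fun n => (r : ℝ≥0∞) ^ e n) atTop (𝓝 ((r : ℝ≥0∞) ^ l)) := by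
  simp only [← ENNReal.coe_rpow_of_ne_zero hr]
  exact ENNReal.tendsto_coe.2 (Filter.Tendsto.nnrpow tendsto_const_nhds he (Or.inl hr))

theorem aux_limsup_rpow (u : ℕ → ℝ≥0∞) (e : ℕ → ℝ) (he : Tendsto e atTop (𝓝 1)) :
    limsup (fun n => u n ^ e n) atTop ≤ limsup u atTop := by
  refine le_of_forall_gt_imp_ge_of_dense fun r hr => ?_
  induction r with
  | top => exact le_top
  | coe r =>
    have hr0 : r ≠ 0 := by
      rintro rfl
      simp at hr
    have h1 := eventually_lt_of_limsup_lt hr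
    have h2 := aux_tendsto r hr0 e 1 he
    rw [ENNReal.rpow_one] at h2
    rw [← h2.limsup_eq]
    refine limsup_le_limsup ?_
    filter_upwards [h1, he.eventually (lt_mem_nhds one_pos)] with n hn hp
    exact ENNReal.rpow_le_rpow hn.le hp.le

theorem aux_ratio (k : ℕ) : Tendsto (fun n : ℕ => ((n + k : ℕ) : ℝ) / (n : ℝ)) atTop (𝓝 1) := by
  have h : Tendsto (fun n : ℕ => 1 + (k : ℝ) / (n : ℝ)) atTop (𝓝 (1 + 0)) :=
    tendsto_const_nhds.add (tendsto_const_div_atTop_nhds_zero_nat (k : ℝ))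
  rw [add_zero] at h
  refine h.congr' ?_
  filter_upwards [eventually_gt_atTop 0] with n hn
  have : (n : ℝ) ≠ 0 := by positivity
  push_cast
  field_simp

theorem aux_shift (a : ℕ → ℝ≥0∞) (k : ℕ) :
    limsup (fun n : ℕ => a (n + k) ^ (1 / n : ℝ)) atTop
      = limsup (fun n : ℕ => a n ^ (1 / n : ℝ)) atTop := by
  rw [← limsup_nat_add (fun n : ℕ => a n ^ (1 / n : ℝ)) k]
  have h1 := aux_ratio k
  have h2 := h1.inv₀ one_ne_zero
  rw [inv_one] at h2
  apply le_antisymm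
  · refine le_trans (le_of_eq ?_) (aux_limsup_rpow _ _ h1)
    apply limsup_congr
    filter_upwards [eventually_gt_atTop 0] with n hn
    have : (n : ℝ) ≠ 0 := by positivity
    have h3 : ((n + k : ℕ) : ℝ) ≠ 0 := by positivity
    rw [← ENNReal.rpow_mul]
    congr 1
    field_simp
  · refine le_trans (le_of_eq ?_) (aux_limsup_rpow _ _ h2)
    apply limsup_congr
    filter_upwards [eventually_gt_atTop 0] with n hn
    have : (n : ℝ) ≠ 0 := by positivity
    have h3 : ((n + k : ℕ) : ℝ) ≠ 0 := by positivity
    rw [← ENNReal.rpow_mul]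
    congr 1
    field_simp

theorem aux_zero {E : Type*} [NormedAddCommGroup E] [NormedSpace ℂ E]
    (T : E →L[ℂ] E) : localSpecRad T 0 = 0 := by
  unfold localSpecRad
  have : (fun n : ℕ => (‖(T ^ n) 0‖₊ : ℝ≥0∞) ^ (1 / n : ℝ)) =ᶠ[atTop] fun _ => 0 := by
    filter_upwards [eventually_gt_atTop 0] with n hn
    have : 0 < 1 / (n : ℝ) := by positivity
    simp [hn]
  rw [limsup_congr this]
  simp

theorem aux_add {E : Type*} [NormedAddCommGroup E] [NormedSpace ℂ E]
    (T : E →L[ℂ] E) (x y : E) :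
    localSpecRad T (x + y) ≤ max (localSpecRad T x) (localSpecRad T y) := by
  refine le_of_forall_gt_imp_ge_of_dense fun r hr => ?_
  induction r with
  | top => exact le_top
  | coe r =>
    have hr0 : r ≠ 0 := by
      rintro rfl
      simp at hr
    have h1 := eventually_lt_of_limsup_lt (lt_of_le_of_lt (le_max_left _ _) hr)
    have h2 := eventually_lt_of_limsup_lt (lt_of_le_of_lt (le_max_right _ _) hr)
    have h3 := aux_tendsto 2 two_ne_zero _ _ (tendsto_const_div_atTop_nhds_zero_nat (1 : ℝ))
    have h4 := ENNReal.Tendsto.mul_const (b := (r : ℝ≥0∞)) h3 (Or.inr ENNReal.coe_ne_top)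
    rw [ENNReal.rpow_zero, one_mul] at h4
    rw [← h4.limsup_eq]
    refine limsup_le_limsup ?_
    filter_upwards [h1, h2, eventually_gt_atTop 0] with n hn hm hp
    have hp' : (0 : ℝ) < n := by positivity
    have key : ∀ a : ℝ≥0∞, a ^ (1 / n : ℝ) < r → a ≤ (r : ℝ≥0∞) ^ (n : ℝ) := by
      intro a ha
      have := ENNReal.rpow_le_rpow ha.le hp'.le
      rwa [← ENNReal.rpow_mul, one_div_mul_cancel hp'.ne', ENNReal.rpow_one] at this
    have h5 : (‖(T ^ n) (x + y)‖₊ : ℝ≥0∞) ≤ (2 : NNReal) * (r : ℝ≥0∞) ^ (n : ℝ) := by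
      rw [map_add]
      calc (‖(T ^ n) x + (T ^ n) y‖₊ : ℝ≥0∞) ≤ ‖(T ^ n) x‖₊ + ‖(T ^ n) y‖₊ := by
            exact_mod_cast nnnorm_add_le _ _
        _ ≤ (r : ℝ≥0∞) ^ (n : ℝ) + (r : ℝ≥0∞) ^ (n : ℝ) := add_le_add (key _ hn) (key _ hm)
        _ = _ := by rw [← two_mul]; rfl
    calc _ ≤ ((2 : NNReal) * (r : ℝ≥0∞) ^ (n : ℝ)) ^ (1 / n : ℝ) :=
          ENNReal.rpow_le_rpow h5 (by positivity)
      _ = _ := by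
        rw [ENNReal.mul_rpow_of_nonneg _ _ (by positivity), ← ENNReal.rpow_mul,
          mul_one_div_cancel hp'.ne', ENNReal.rpow_one]

theorem aux_sum {E : Type*} [NormedAddCommGroup E] [NormedSpace ℂ E]
    (T : E →L[ℂ] E) (f : ℕ → E) (N : ℕ) :
    localSpecRad T (∑ k ∈ Finset.range N, f k) ≤ ⨆ k, localSpecRad T (f k) := by
  induction N with
  | zero => simp [aux_zero]
  | succ N ih =>
    rw [Finset.sum_range_succ]
    exact (aux_add T _ _).trans (max_le ih (le_iSup (fun k => localSpecRad T (f k)) N))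

section Shift2

variable {H : Type*} [NormedAddCommGroup H] [InnerProductSpace ℂ H] [CompleteSpace H]

theorem aux_wB (A : ℕ → (H →L[ℂ] H)ˣ) (k : ℕ) (y : H) :
    (wB A k : H →L[ℂ] H) (wBi A k y) = y := by
  have h := (wB A k).mul_inv
  exact congrArg (fun T : H →L[ℂ] H => T y) h

theorem aux_pow (A : ℕ → (H →L[ℂ] H)ˣ)
    (S : lp (fun _ : ℕ => H) 2 →L[ℂ] lp (fun _ : ℕ => H) 2)
    (hS : ∀ (x : lp (fun _ : ℕ => H) 2) (n : ℕ), S x (n + 1) = (A n : H →L[ℂ] H) (x n))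
    (x : lp (fun _ : ℕ => H) 2) (n k : ℕ) :
    (S ^ n) x (n + k) = (wB A (n + k) : H →L[ℂ] H) (wBi A k (x k)) := by
  induction n with
  | zero => simp [aux_wB]
  | succ n ih =>
    rw [pow_succ', show n + 1 + k = (n + k) + 1 by omega]
    change S ((S ^ n) x) (n + k + 1) = _
    rw [hS, ih]
    rfl

theorem aux_pow_lt
    (S : lp (fun _ : ℕ => H) 2 →L[ℂ] lp (fun _ : ℕ => H) 2)
    (A : ℕ → (H →L[ℂ] H)ˣ)
    (hS0 : ∀ x : lp (fun _ : ℕ => H) 2, S x 0 = 0)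
    (hS : ∀ (x : lp (fun _ : ℕ => H) 2) (n : ℕ), S x (n + 1) = (A n : H →L[ℂ] H) (x n))
    (x : lp (fun _ : ℕ => H) 2) (n j : ℕ) (hj : j < n) :
    (S ^ n) x j = 0 := by
  induction n generalizing j with
  | zero => omega
  | succ n ih =>
    rw [pow_succ']
    change S ((S ^ n) x) j = _
    cases j with
    | zero => exact hS0 _
    | succ j => rw [hS, ih j (by omega), map_zero]

theorem aux_single (A : ℕ → (H →L[ℂ] H)ˣ)
    (S : lp (fun _ : ℕ => H) 2 →L[ℂ] lp (fun _ : ℕ => H) 2)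
    (hS0 : ∀ x : lp (fun _ : ℕ => H) 2, S x 0 = 0)
    (hS : ∀ (x : lp (fun _ : ℕ => H) 2) (n : ℕ), S x (n + 1) = (A n : H →L[ℂ] H) (x n))
    (n k : ℕ) (y : H) :
    (S ^ n) (lp.single 2 k y) =
      lp.single 2 (n + k) ((wB A (n + k) : H →L[ℂ] H) (wBi A k y)) := by
  apply lp.ext
  funext j
  rcases lt_or_ge j n with hj | hj
  · rw [aux_pow_lt S A hS0 hS _ _ _ hj, lp.single_apply_ne _ _ _ (by omega)]
  · obtain ⟨i, rfl⟩ := Nat.exists_eq_add_of_le hj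
    rw [aux_pow A S hS]
    by_cases hik : i = k
    · subst hik
      rw [lp.single_apply_self, lp.single_apply_self]
    · rw [lp.single_apply_ne _ _ _ hik, lp.single_apply_ne _ _ _ (by omega), map_zero, map_zero]

theorem aux_nn (A : ℕ → (H →L[ℂ] H)ˣ)
    (S : lp (fun _ : ℕ => H) 2 →L[ℂ] lp (fun _ : ℕ => H) 2)
    (hS0 : ∀ x : lp (fun _ : ℕ => H) 2, S x 0 = 0)
    (hS : ∀ (x : lp (fun _ : ℕ => H) 2) (n : ℕ), S x (n + 1) = (A n : H →L[ℂ] H) (x n))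
    (n k : ℕ) (y : H) :
    ‖(S ^ n) (lp.single 2 k y)‖₊ = ‖(wB A (n + k) : H →L[ℂ] H) (wBi A k y)‖₊ := by
  rw [aux_single A S hS0 hS]
  exact NNReal.eq (lp.norm_single two_pos _ _)

theorem aux_rad (A : ℕ → (H →L[ℂ] H)ˣ)
    (S : lp (fun _ : ℕ => H) 2 →L[ℂ] lp (fun _ : ℕ => H) 2)
    (hS0 : ∀ x : lp (fun _ : ℕ => H) 2, S x 0 = 0)
    (hS : ∀ (x : lp (fun _ : ℕ => H) 2) (n : ℕ), S x (n + 1) = (A n : H →L[ℂ] H) (x n))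
    (k : ℕ) (y : H) :
    localSpecRad S (lp.single 2 k y) =
      limsup (fun n : ℕ => (‖(wB A n : H →L[ℂ] H) (wBi A k y)‖₊ : ℝ≥0∞) ^ (1 / n : ℝ)) atTop := by
  unfold localSpecRad
  simp only [aux_nn A S hS0 hS]
  exact aux_shift (fun n => (‖(wB A n : H →L[ℂ] H) (wBi A k y)‖₊ : ℝ≥0∞)) k

theorem aux_ne (A : ℕ → (H →L[ℂ] H)ˣ) (k : ℕ) (y : H) (hy : y ≠ 0) : wBi A k y ≠ 0 := by
  intro h
  apply hy
  rw [← aux_wB A k y, h, map_zero]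

end Shift2

theorem stmt12 {H : Type*} [NormedAddCommGroup H] [InnerProductSpace ℂ H] [CompleteSpace H]
    (A : ℕ → (H →L[ℂ] H)ˣ)
    (hbdd : ∃ C : ℝ, ∀ n, ‖(A n : H →L[ℂ] H)‖ ≤ C)
    (S : lp (fun _ : ℕ => H) 2 →L[ℂ] lp (fun _ : ℕ => H) 2)
    (hS0 : ∀ x : lp (fun _ : ℕ => H) 2, S x 0 = 0)
    (hS : ∀ (x : lp (fun _ : ℕ => H) 2) (n : ℕ), S x (n + 1) = (A n : H →L[ℂ] H) (x n))
    (x : lp (fun _ : ℕ => H) 2) (hx : x ≠ 0)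
    (hfin : ∃ N : ℕ, ∀ k, N ≤ k → x k = 0) :
    R3minus A ≤ localSpecRad S x ∧
    localSpecRad S x = ⨆ k : ℕ, localSpecRad S (lp.single 2 k (x k)) ∧
    localSpecRad S x ≤ R3plus A := by
  have heq : localSpecRad S x = ⨆ k : ℕ, localSpecRad S (lp.single 2 k (x k)) := by
    apply le_antisymm
    · obtain ⟨N, hN⟩ := hfin
      have hsum : x = ∑ k ∈ Finset.range N, lp.single 2 k (x k) := by
        apply lp.ext
        funext j
        rw [lp.coeFn_sum, Finset.sum_apply]
        simp only [lp.coeFn_single]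
        rw [Finset.sum_pi_single]
        split_ifs with h
        · rfl
        · exact hN j (by simpa using h)
      conv_lhs => rw [hsum]
      exact aux_sum S (fun k => lp.single 2 k (x k)) N
    · refine iSup_le fun k => ?_
      unfold localSpecRad
      refine limsup_le_limsup (Eventually.of_forall fun n => ?_)
      refine ENNReal.rpow_le_rpow (ENNReal.coe_le_coe.2 ?_) (by positivity)
      rw [aux_nn A S hS0 hS, ← aux_pow A S hS]
      exact lp.norm_apply_le_norm two_ne_zero _ _
  refine ⟨?_, heq, ?_⟩
  · have : ∃ k, x k ≠ 0 := by
      by_contra! h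
      exact hx (lp.ext (funext h))
    obtain ⟨k, hk⟩ := this
    rw [heq]
    refine le_trans ?_ (le_iSup _ k)
    rw [aux_rad A S hS0 hS]
    exact iInf₂_le (wBi A k (x k)) (aux_ne A k _ hk)
  · rw [heq]
    refine iSup_le fun k => ?_
    by_cases hk : x k = 0
    · rw [hk, lp.single_zero, aux_zero]
      exact zero_le
    · rw [aux_rad A S hS0 hS]
      exact le_iSup₂ (f := fun (x : H) (_ : x ≠ 0) =>
        limsup (fun n : ℕ => (‖(wB A n : H →L[ℂ] H) x‖₊ : ℝ≥0∞) ^ (1 / n : ℝ)) atTop)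
        (wBi A k (x k)) (aux_ne A k _ hk)
end
end

section
/- For every nonzero element x = (x_0, x_1, ...) ∈ Ĥ, the closed disc {λ ∈ ℂ : |λ| ≤ min(R_A(x), r₃(S_u))} is contained in the local spectrum σ_{S_u}(x). -/
open Filter Topology ENNReal

noncomputable section

theorem aux_series {H : Type*} [NormedAddCommGroup H] [NormedSpace ℂ H] [CompleteSpace H]
    (y : ℕ → H) (ρ : ℝ) (hρ : 0 < ρ)
    (hy : ENNReal.ofReal ρ ≤
      (limsup (fun n : ℕ => (‖y n‖₊ : ℝ≥0∞) ^ (1 / n : ℝ)) atTop)⁻¹)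
    (V : Set ℂ) (hV : IsOpen V) (hne : V.Nonempty) (hVb : V ⊆ Metric.ball 0 ρ)
    (h0 : ∀ m ∈ V, ∀ L : H,
      Tendsto (fun n => ∑ k ∈ Finset.range n, m ^ k • y k) atTop (𝓝 L) → L = 0) :
    ∀ n, y n = 0 := by
  let p : FormalMultilinearSeries ℂ ℂ H := fun n =>
    ContinuousMultilinearMap.mkPiRing ℂ (Fin n) (y n)
  have hpn : ∀ n, ‖p n‖₊ = ‖y n‖₊ := fun n => by
    apply NNReal.eq
    simp [p, ContinuousMultilinearMap.norm_mkPiRing]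
  have hrad : ENNReal.ofReal ρ ≤ p.radius := by
    rw [FormalMultilinearSeries.radius_eq_liminf]
    rw [ENNReal.inv_limsup] at hy
    convert hy using 3 with n
    rw [hpn, one_div, ENNReal.coe_rpow_of_nonneg _ (by positivity)]
  have hpos : 0 < p.radius := lt_of_lt_of_le (by simpa using hρ) hrad
  have hF := p.hasFPowerSeriesOnBall hpos
  have hsub : Metric.ball (0 : ℂ) ρ ⊆ Metric.eball 0 p.radius := by
    rw [← Metric.eball_ofReal]
    exact Metric.eball_subset_eball hrad
  have hz : ∀ m ∈ V, p.sum m = 0 := by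
    intro m hm
    apply h0 m hm
    have := (hF.hasSum (hsub (hVb hm))).tendsto_sum_nat
    simpa [p] using this
  obtain ⟨z, hzV⟩ := hne
  have hEq := (hF.analyticOnNhd.mono hsub).eqOn_zero_of_preconnected_of_eventuallyEq_zero
    (convex_ball (0 : ℂ) ρ).isPreconnected (hVb hzV)
    (by filter_upwards [hV.mem_nhds hzV] with m hm using hz m hm)
  have hp0 : p = 0 := hF.hasFPowerSeriesAt.eq_zero_of_eventually
    (by filter_upwards [Metric.ball_mem_nhds (0 : ℂ) hρ] with m hm using hEq hm)
  intro n
  have := hpn n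
  rw [hp0] at this
  simpa using this.symm

theorem aux_freq (b : ℕ → ℝ) (hb : ∀ n, 0 ≤ b n) (ρ : ℝ) (hρ : 0 < ρ)
    (h : ENNReal.ofReal ρ <
      (liminf (fun n : ℕ => (ENNReal.ofReal (b n)) ^ (1 / n : ℝ)) atTop)⁻¹) :
    ∃ᶠ n in atTop, b n * ρ ^ n ≤ 1 := by
  rw [ENNReal.lt_inv_iff_lt_inv] at h
  have hf := (frequently_lt_of_liminf_lt (by isBoundedDefault) h).and_eventually
    (eventually_gt_atTop 0)
  refine hf.mono ?_
  rintro n ⟨h1, h2⟩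
  rw [← ENNReal.ofReal_inv_of_pos hρ, ENNReal.ofReal_rpow_of_nonneg (hb n) (by positivity),
    ENNReal.ofReal_lt_ofReal_iff (by positivity)] at h1
  have h3 : b n = (b n ^ (1 / n : ℝ)) ^ n := by
    rw [one_div, Real.rpow_inv_natCast_pow (hb n) h2.ne']
  have h4 : b n ≤ (ρ⁻¹) ^ n := by
    rw [h3]; exact pow_le_pow_left₀ (Real.rpow_nonneg (hb n) _) h1.le n
  calc b n * ρ ^ n ≤ (ρ⁻¹) ^ n * ρ ^ n := by gcongr
    _ = 1 := by rw [← mul_pow, inv_mul_cancel₀ hρ.ne', one_pow]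

theorem stmt13 {H : Type*} [NormedAddCommGroup H] [InnerProductSpace ℂ H] [CompleteSpace H]
    (A : ℕ → (H →L[ℂ] H)ˣ)
    (hbdd : ∃ C : ℝ, ∀ n, ‖(A n : H →L[ℂ] H)‖ ≤ C)
    (S : lp (fun _ : ℕ => H) 2 →L[ℂ] lp (fun _ : ℕ => H) 2)
    (hS0 : ∀ x : lp (fun _ : ℕ => H) 2, S x 0 = 0)
    (hS : ∀ (x : lp (fun _ : ℕ => H) 2) (n : ℕ), S x (n + 1) = (A n : H →L[ℂ] H) (x n)) :
    ∀ x : lp (fun _ : ℕ => H) 2, x ≠ 0 →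
      {l : ℂ | (‖l‖₊ : ℝ≥0∞) ≤ min (RA A x) (r3 A)} ⊆ localSpectrum S x := by
  intro x hx l hl
  simp only [Set.mem_setOf_eq, le_min_iff] at hl
  obtain ⟨hl1, hl2⟩ := hl
  rintro ⟨U, hU, hlU, f, hf, hfx⟩
  apply hx
  have hBB : ∀ n (v : H), (wB A n : H →L[ℂ] H) (wBi A n v) = v := fun n v => by
    have : (wB A n : H →L[ℂ] H) * wBi A n = 1 := Units.mul_inv _
    exact congrArg (fun T : H →L[ℂ] H => T v) this
  have hstep : ∀ n (v : H), wBi A (n + 1) ((A n : H →L[ℂ] H) v) = wBi A n v := fun n v => by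
    have : wBi A (n + 1) * (A n : H →L[ℂ] H) = wBi A n := by
      simp [wBi, wB, mul_assoc]
    exact congrArg (fun T : H →L[ℂ] H => T v) this
  suffices hy : ∀ n, wBi A n (x n) = 0 by
    ext n
    have := hBB n (x n)
    rw [hy n, map_zero] at this
    simpa using this.symm
  have e0 : ∀ m ∈ U, m • f m 0 = - x 0 := by
    intro m hm
    have h := congrArg (fun z : lp (fun _ : ℕ => H) 2 => z 0) (hfx m hm)
    simp only [lp.coeFn_sub, lp.coeFn_smul, Pi.sub_apply, Pi.smul_apply, hS0, zero_sub] at h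
    rw [← h, neg_neg]
  have e1 : ∀ m ∈ U, ∀ n, (A n : H →L[ℂ] H) (f m n) - m • f m (n + 1) = x (n + 1) := by
    intro m hm n
    have h := congrArg (fun z : lp (fun _ : ℕ => H) 2 => z (n + 1)) (hfx m hm)
    simpa only [lp.coeFn_sub, lp.coeFn_smul, Pi.sub_apply, Pi.smul_apply, hS] using h
  have g1 : ∀ m ∈ U, ∀ n,
      wBi A n (f m n) - m • wBi A (n + 1) (f m (n + 1)) = wBi A (n + 1) (x (n + 1)) := by
    intro m hm n
    rw [← e1 m hm n, map_sub, hstep, map_smul]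
  have key : ∀ m ∈ U, ∀ n, m ^ (n + 1) • wBi A n (f m n) =
      - ∑ k ∈ Finset.range (n + 1), m ^ k • wBi A k (x k) := by
    intro m hm n
    induction n with
    | zero => simp [wBi, wB, e0 m hm]
    | succ n ih =>
      rw [Finset.sum_range_succ, neg_add, ← ih, ← g1 m hm n, smul_sub, smul_smul, ← pow_succ]
      abel
  by_cases hl0 : l = 0
  · subst hl0
    have hc : ContinuousAt f 0 := (hf 0 hlU).continuousAt
    -- components of `f` are continuous at zero
    have hcn : ∀ n, ContinuousAt (fun m => f m n) 0 := by
      intro n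
      have hlip : ∀ a b : lp (fun _ : ℕ => H) 2, ‖a n - b n‖ ≤ ‖a - b‖ := fun a b =>
        lp.norm_apply_le_norm (by simp) (a - b) n
      have ht : Tendsto (fun m => ‖f m - f 0‖) (𝓝 0) (𝓝 0) :=
        tendsto_iff_norm_sub_tendsto_zero.1 hc
      exact tendsto_iff_norm_sub_tendsto_zero.2
        (squeeze_zero (fun _ => norm_nonneg _) (fun m => hlip (f m) (f 0)) ht)
    have hzero : ∀ v : ℂ → H, ContinuousAt v 0 → (∀ m ∈ U, m • v m = 0) → v 0 = 0 := by
      intro v hv h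
      have hE : v =ᶠ[𝓝[≠] 0] fun _ => 0 := by
        filter_upwards [mem_nhdsWithin_of_mem_nhds (hU.mem_nhds hlU), self_mem_nhdsWithin]
          with m hm hm0
        exact (smul_eq_zero.1 (h m hm)).resolve_left hm0
      exact tendsto_nhds_unique (hv.tendsto.mono_left nhdsWithin_le_nhds)
        (tendsto_const_nhds.congr' hE.symm)
    -- each `f m n` vanishes on `U \ {0}`, and each coordinate of `x` vanishes
    have hall : ∀ n, wBi A n (x n) = 0 ∧ ∀ m ∈ U, m • wBi A n (f m n) = 0 := by
      intro n
      induction n with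
      | zero =>
        have h := e0 0 hlU
        rw [zero_smul, eq_comm, neg_eq_zero] at h
        refine ⟨by rw [h, map_zero], fun m hm => ?_⟩
        rw [← map_smul, e0 m hm, h, neg_zero, map_zero]
      | succ n ih =>
        have hv := hzero (fun m => wBi A n (f m n))
          ((wBi A n).continuous.continuousAt.comp (hcn n)) ih.2
        have h := g1 0 hlU n
        simp only at hv
        rw [hv, zero_smul, sub_zero] at h
        refine ⟨h.symm, fun m hm => ?_⟩
        by_cases hm0 : m = 0
        · rw [hm0, zero_smul]
        have h2 := g1 m hm n
        rw [← h, (smul_eq_zero.1 (ih.2 m hm)).resolve_left hm0, zero_sub, neg_eq_zero] at h2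
        exact h2
    exact fun n => (hall n).1
  · have hlpos : 0 < ‖l‖ := norm_pos_iff.2 hl0
    have hcoe : (‖l‖₊ : ℝ≥0∞) = ENNReal.ofReal ‖l‖ := (ofReal_norm_eq_enorm l).symm
    rw [hcoe] at hl1 hl2
    refine aux_series (fun n => wBi A n (x n)) ‖l‖ hlpos hl1 (U ∩ Metric.ball 0 ‖l‖)
      (hU.inter Metric.isOpen_ball) ?_ Set.inter_subset_right ?_
    · have : l ∈ closure (Metric.ball (0 : ℂ) ‖l‖) := by
        rw [closure_ball _ hlpos.ne']; simp
      exact mem_closure_iff.1 this U hU hlU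
    · rintro m ⟨hm, hml⟩ L hL
      have hml' : ‖m‖ < ‖l‖ := by simpa using hml
      obtain ⟨ρ, h1, h2⟩ := exists_between hml'
      have hρ : 0 < ρ := (norm_nonneg m).trans_lt h1
      have hfreq := aux_freq (fun n => ‖wBi A n‖) (fun n => norm_nonneg _) ρ hρ (by
        refine lt_of_lt_of_le ((ENNReal.ofReal_lt_ofReal_iff hlpos).2 h2) ?_
        simpa [r3, ofReal_norm_eq_enorm, enorm_eq_nnnorm] using hl2)
      have hq : Tendsto (fun n : ℕ => ‖m‖ * ‖f m‖ * (‖m‖ / ρ) ^ n) atTop (𝓝 0) := by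
        have := (tendsto_pow_atTop_nhds_zero_of_lt_one (r := ‖m‖ / ρ) (by positivity)
          ((div_lt_one hρ).2 h1)).const_mul (‖m‖ * ‖f m‖)
        simpa using this
      have hlim := ((hL.comp (tendsto_add_atTop_nat 1)).norm).sub hq
      have hle := le_of_tendsto_of_frequently (b := 0) hlim (hfreq.mono (by
        intro n hn
        have hk := key m hm n
        simp only [Function.comp]
        rw [sub_nonpos, ← norm_neg, ← hk, norm_smul, norm_pow]
        have h3 : ‖wBi A n (f m n)‖ ≤ ‖wBi A n‖ * ‖f m‖ :=
          ((wBi A n).le_opNorm _).trans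
            (mul_le_mul_of_nonneg_left (lp.norm_apply_le_norm (by simp) (f m) n) (norm_nonneg _))
        have h4 : ‖wBi A n‖ ≤ 1 / ρ ^ n := (le_div_iff₀ (by positivity)).2 hn
        calc ‖m‖ ^ (n + 1) * ‖wBi A n (f m n)‖
            ≤ ‖m‖ ^ (n + 1) * (1 / ρ ^ n * ‖f m‖) := by
              gcongr
              exact h3.trans (by gcongr)
          _ = ‖m‖ * ‖f m‖ * (‖m‖ / ρ) ^ n := by rw [div_pow, pow_succ]; ring))
      rw [sub_zero] at hle
      exact norm_le_zero_iff.1 hle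
end
end

section
/- Let x = (x_0, x_1, ...) be a nonzero finitely supported element of Ĥ (i.e. x_k = 0 for all but finitely many k). Then the closed disc {λ ∈ ℂ : |λ| ≤ R₃⁻(S_u)} is contained in the local spectrum σ_{S_u}(x). -/
open Filter Topology ENNReal

noncomputable section

lemma aux_limsup (a : ℕ → ℝ≥0∞) (D : ℝ≥0∞) (hD : D ≠ ⊤) (hD0 : D ≠ 0) (r : ℝ≥0∞) (hr : r ≠ ⊤)
    (N : ℕ) (h : ∀ n, N ≤ n → a n ≤ D * r ^ n) :
    limsup (fun n : ℕ => a n ^ (1 / n : ℝ)) atTop ≤ r := by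
  have h1 : Tendsto (fun n : ℕ => D ^ (1 / n : ℝ) * r) atTop (𝓝 (1 * r)) := by
    apply ENNReal.Tendsto.mul_const _ (Or.inr hr)
    have h0 : Tendsto (fun n : ℕ => (1 / n : ℝ)) atTop (𝓝 0) := tendsto_one_div_atTop_nhds_zero_nat
    have hp : 0 < D.toReal := ENNReal.toReal_pos hD0 hD
    have := (Real.continuousAt_const_rpow (a := D.toReal) (b := 0) hp.ne').tendsto.comp h0
    have h2 := ENNReal.tendsto_ofReal this
    simp only [Real.rpow_zero, ENNReal.ofReal_one] at h2
    refine h2.congr fun n => ?_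
    simp only [Function.comp]
    rw [← ENNReal.ofReal_rpow_of_pos hp, ENNReal.ofReal_toReal hD]
  rw [one_mul] at h1
  rw [← h1.limsup_eq]
  apply limsup_le_limsup
  · filter_upwards [eventually_ge_atTop (max N 1)] with n hn
    have hn1 : n ≠ 0 := by have := le_max_right N 1; omega
    calc a n ^ (1 / n : ℝ) ≤ (D * r ^ n) ^ (1 / n : ℝ) :=
          ENNReal.rpow_le_rpow (h n (le_trans (le_max_left _ _) hn)) (by positivity)
      _ = D ^ (1 / n : ℝ) * r := by
          rw [ENNReal.mul_rpow_of_nonneg _ _ (by positivity), ← ENNReal.rpow_natCast,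
            ← ENNReal.rpow_mul, mul_one_div_cancel (by exact_mod_cast hn1), ENNReal.rpow_one]
  all_goals isBoundedDefault

lemma aux_poly {H : Type*} [NormedAddCommGroup H] [InnerProductSpace ℂ H]
    (N : ℕ) (y : ℕ → H) (j : ℕ) (hjN : j < N) (hj : y j ≠ 0) (V : Set ℂ) (hV : IsOpen V)
    (hne : V.Nonempty) : ∃ m ∈ V, ∑ k ∈ Finset.range N, m ^ k • y k ≠ 0 := by
  by_contra hcon
  push Not at hcon
  let q : Polynomial ℂ := ∑ k ∈ Finset.range N, Polynomial.monomial k (inner ℂ (y j) (y k))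
  have hq : q = 0 := by
    apply Polynomial.eq_zero_of_infinite_isRoot
    have hinf : V.Infinite := by
      obtain ⟨v, hv⟩ := hne
      exact infinite_of_mem_nhds v (hV.mem_nhds hv)
    refine hinf.mono fun m hm => ?_
    have h := congrArg (fun z => inner ℂ (y j) z) (hcon m hm)
    simp only [inner_sum, inner_smul_right, inner_zero_right] at h
    simp only [Set.mem_setOf_eq, Polynomial.IsRoot, q, Polynomial.eval_finsetSum,
      Polynomial.eval_monomial]
    rw [← h]
    exact Finset.sum_congr rfl fun k _ => mul_comm _ _
  have h := congrArg (fun p => Polynomial.coeff p j) hq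
  simp [q, Polynomial.finsetSum_coeff, Polynomial.coeff_monomial] at h
  exact absurd (h hjN) hj

lemma aux_wB_s14 {H : Type*} [NormedAddCommGroup H] [InnerProductSpace ℂ H] [CompleteSpace H]
    (A : ℕ → (H →L[ℂ] H)ˣ) (n : ℕ) (v : H) :
    (wB A n : H →L[ℂ] H) (wBi A n v) = v := by
  have := (wB A n).mul_inv
  exact congrArg (fun T : H →L[ℂ] H => T v) this

lemma aux_wB' {H : Type*} [NormedAddCommGroup H] [InnerProductSpace ℂ H] [CompleteSpace H]
    (A : ℕ → (H →L[ℂ] H)ˣ) (n : ℕ) (v : H) :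
    wBi A (n+1) ((A n : H →L[ℂ] H) v) = wBi A n v := by
  have : ((wB A (n+1))⁻¹ * A n : (H →L[ℂ] H)ˣ) = (wB A n)⁻¹ := by
    simp [wB]
  have := congrArg (fun T : (H →L[ℂ] H)ˣ => (T : H →L[ℂ] H) v) this
  exact this

theorem stmt14 {H : Type*} [NormedAddCommGroup H] [InnerProductSpace ℂ H] [CompleteSpace H]
    (A : ℕ → (H →L[ℂ] H)ˣ)
    (hbdd : ∃ C : ℝ, ∀ n, ‖(A n : H →L[ℂ] H)‖ ≤ C)
    (S : lp (fun _ : ℕ => H) 2 →L[ℂ] lp (fun _ : ℕ => H) 2)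
    (hS0 : ∀ x : lp (fun _ : ℕ => H) 2, S x 0 = 0)
    (hS : ∀ (x : lp (fun _ : ℕ => H) 2) (n : ℕ), S x (n + 1) = (A n : H →L[ℂ] H) (x n))
    (x : lp (fun _ : ℕ => H) 2) (hx : x ≠ 0)
    (hfin : ∃ N : ℕ, ∀ k, N ≤ k → x k = 0) :
    {l : ℂ | (‖l‖₊ : ℝ≥0∞) ≤ R3minus A} ⊆ localSpectrum S x := by
  intro l hl
  rintro ⟨U, hU, hlU, f, hf, hfx⟩
  obtain ⟨N, hN⟩ := hfin
  simp only [Set.mem_setOf_eq] at hl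
  set y : ℕ → H := fun k => wBi A k (x k) with hy
  have hxB : ∀ k, x k = (wB A k : H →L[ℂ] H) (y k) := fun k => (aux_wB_s14 A k _).symm
  have key : ∀ m ∈ U, ∀ n, m ^ (n+1) • wBi A n (f m n) =
      - ∑ k ∈ Finset.range (n+1), m ^ k • y k := by
    intro m hm n
    have hm' := hfx m hm
    induction n with
    | zero =>
      have h0 : S (f m) 0 - m • f m 0 = x 0 := by rw [← hm']; rfl
      rw [hS0, zero_sub] at h0
      simp only [hy, zero_add, pow_one, Finset.sum_range_one, pow_zero, one_smul]
      rw [← h0, map_neg, neg_neg, map_smul]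
    | succ n ih =>
      have h0 : S (f m) (n+1) - m • f m (n+1) = x (n+1) := by rw [← hm']; rfl
      rw [hS] at h0
      have h1 : y (n+1) = wBi A n (f m n) - m • wBi A (n+1) (f m (n+1)) := by
        simp only [hy, ← h0]
        rw [map_sub, aux_wB', map_smul]
      rw [Finset.sum_range_succ, neg_add, ← ih, h1, smul_sub, smul_smul]
      rw [← pow_succ]
      abel
  obtain ⟨j, hj⟩ : ∃ j, y j ≠ 0 := by
    by_contra hcon
    push Not at hcon
    apply hx
    ext k
    rw [hxB, hcon]
    simp
  have hy0 : ∀ k, N ≤ k → y k = 0 := fun k hk => by simp [hy, hN k hk]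
  have hjN : j < N := by
    by_contra h
    exact hj (hy0 j (not_lt.mp h))
  by_cases hl0 : l = 0
  · subst hl0
    have hall : ∀ k, y k = 0 := by
      intro k
      induction k using Nat.strong_induction_on with
      | _ k ih =>
      have hc : ContinuousAt (fun m => -(m • wBi A k (f m k))) 0 := by
        have hfc : ContinuousAt f 0 := (hf 0 hlU).continuousAt
        have h1 : ContinuousAt (fun m => f m k) 0 :=
          (lp.evalCLM ℂ (fun _ : ℕ => H) 2 k).continuous.continuousAt.comp hfc
        exact (continuousAt_id.smul ((wBi A k).continuous.continuousAt.comp h1)).neg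
      have ht : Tendsto (fun m => -(m • wBi A k (f m k))) (𝓝[≠] 0) (𝓝 0) := by
        have := hc.tendsto.mono_left (nhdsWithin_le_nhds (s := {0}ᶜ))
        simpa using this
      have ht2 : Tendsto (fun m => -(m • wBi A k (f m k))) (𝓝[≠] 0) (𝓝 (y k)) := by
        apply tendsto_const_nhds.congr'
        filter_upwards [self_mem_nhdsWithin, nhdsWithin_le_nhds (hU.mem_nhds hlU)] with m hm hmU
        have hk := key m hmU k
        rw [Finset.sum_range_succ, Finset.sum_eq_zero, zero_add, pow_succ, mul_smul,
          ← smul_neg] at hk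
        · have hmk : m ^ k ≠ 0 := pow_ne_zero _ hm
          have := smul_right_injective H hmk hk
          simp only at this
          rw [this, neg_neg]
        · intro i hi
          rw [ih i (Finset.mem_range.mp hi), smul_zero]
      exact tendsto_nhds_unique ht2 ht
    exact hj (hall j)
  · have hlpos : 0 < ‖l‖ := norm_pos_iff.mpr hl0
    obtain ⟨m, ⟨hmU, hml⟩, hp⟩ := aux_poly N y j hjN hj (U ∩ Metric.ball 0 ‖l‖)
      (hU.inter Metric.isOpen_ball) (by
        have hcl : l ∈ closure (Metric.ball (0:ℂ) ‖l‖) := by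
          rw [closure_ball _ hlpos.ne']; simp
        exact mem_closure_iff.mp hcl U hU hlU)
    set p := ∑ k ∈ Finset.range N, m ^ k • y k with hpdef
    have hB : ∀ n, N ≤ n → (wB A n : H →L[ℂ] H) p = - (m ^ (n+1) • f m n) := by
      intro n hn
      have hk := key m hmU n
      have hs : ∑ k ∈ Finset.range (n+1), m ^ k • y k = p := by
        rw [hpdef]
        symm
        apply Finset.sum_subset
        · intro i hi; simp at hi ⊢; omega
        · intro i _ hi
          rw [hy0 i (by simpa using hi), smul_zero]
      rw [hs] at hk
      rw [← neg_neg p, ← hk, map_neg, map_smul, aux_wB_s14]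
    have hle : R3minus A ≤ (‖m‖₊ : ℝ≥0∞) := by
      refine (iInf₂_le p hp).trans ?_
      refine aux_limsup _ ((‖m‖₊ * ‖f m‖₊ + 1 : NNReal) : ℝ≥0∞) ENNReal.coe_ne_top
        (by simp) _ ENNReal.coe_ne_top N ?_
      intro n hn
      rw [hB n hn]
      have hfn : ‖f m n‖₊ ≤ ‖f m‖₊ := lp.norm_apply_le_norm (by norm_num) (f m) n
      rw [← ENNReal.coe_pow, ← ENNReal.coe_mul, ENNReal.coe_le_coe, nnnorm_neg, nnnorm_smul,
        nnnorm_pow]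
      calc ‖m‖₊ ^ (n+1) * ‖f m n‖₊ ≤ ‖m‖₊ ^ (n+1) * ‖f m‖₊ := by gcongr
        _ = (‖m‖₊ * ‖f m‖₊) * ‖m‖₊ ^ n := by ring
        _ ≤ _ := by gcongr; exact le_self_add
    have hlm := hl.trans hle
    rw [ENNReal.coe_le_coe] at hlm
    have : ‖m‖ < ‖l‖ := by simpa using hml
    exact absurd (show ‖l‖ ≤ ‖m‖ from hlm) (not_le.mpr this)
end
end

section
/- For every nonzero x ∈ H, the local spectrum of S_u at x^{(0)} is the closed disc σ_{S_u}(x^{(0)}) = {λ ∈ ℂ : |λ| ≤ r_{S_u}(x^{(0)})}. -/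
open Filter Topology ENNReal

noncomputable section

/-- The power series with coefficients `Tⁿ x`. -/
def orbSeries {E : Type*} [NormedAddCommGroup E] [NormedSpace ℂ E]
    (T : E →L[ℂ] E) (x : E) : FormalMultilinearSeries ℂ ℂ E :=
  fun n => ContinuousMultilinearMap.mkPiRing ℂ (Fin n) ((T ^ n) x)

theorem orbSeries_radius {E : Type*} [NormedAddCommGroup E] [NormedSpace ℂ E]
    (T : E →L[ℂ] E) (x : E) : (orbSeries T x).radius = (localSpecRad T x)⁻¹ := by
  have hn : ∀ n, ‖orbSeries T x n‖₊ = ‖(T ^ n) x‖₊ := fun n =>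
    NNReal.eq (ContinuousMultilinearMap.norm_mkPiRing _)
  rw [localSpecRad, ENNReal.inv_limsup, FormalMultilinearSeries.radius_eq_liminf]
  congr 1
  ext n
  rw [hn, one_div, ENNReal.coe_rpow_of_nonneg _ (by positivity)]

theorem mem_localResolventSet_of_lt {E : Type*} [NormedAddCommGroup E] [NormedSpace ℂ E]
    [CompleteSpace E] (T : E →L[ℂ] E) (x : E) (l : ℂ)
    (h : localSpecRad T x < (‖l‖₊ : ℝ≥0∞)) : l ∈ localResolventSet T x := by
  have hl0 : ∀ m : ℂ, localSpecRad T x < (‖m‖₊ : ℝ≥0∞) → m ≠ 0 := by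
    rintro m hm rfl
    simp at hm
  have hrad : 0 < (orbSeries T x).radius := by
    rw [orbSeries_radius]
    exact ENNReal.inv_pos.2 (ne_top_of_lt h)
  have hps := (orbSeries T x).hasFPowerSeriesOnBall hrad
  set g := (orbSeries T x).sum with hg
  have hball : ∀ m : ℂ, localSpecRad T x < (‖m‖₊ : ℝ≥0∞) →
      m⁻¹ ∈ Metric.eball (0 : ℂ) (orbSeries T x).radius := by
    intro m hm
    rw [Metric.mem_eball, edist_zero_right, orbSeries_radius, enorm_inv (hl0 m hm)]
    exact ENNReal.inv_lt_inv.2 hm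
  refine ⟨{m | localSpecRad T x < (‖m‖₊ : ℝ≥0∞)}, ?_, h, fun m => -(m⁻¹ • g m⁻¹), ?_, ?_⟩
  · exact isOpen_lt continuous_const (by fun_prop)
  · intro m hm
    have h1 : AnalyticAt ℂ (fun m : ℂ => m⁻¹) m := analyticAt_id.inv (hl0 m hm)
    have h2 : AnalyticAt ℂ g m⁻¹ := hps.analyticAt_of_mem (hball m hm)
    exact (h1.smul (h2.comp' h1)).neg
  · intro m hm
    have hm0 := hl0 m hm
    have hs := hps.hasSum (hball m hm)
    have hs' : HasSum (fun n : ℕ => (m⁻¹) ^ n • (T ^ n) x) (g m⁻¹) := by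
      simpa [orbSeries] using hs
    have h3 := (hs'.mapL T).const_smul m⁻¹
    have h4 := (hasSum_nat_add_iff' 1).2 hs'
    have h5 : g m⁻¹ - x = m⁻¹ • T (g m⁻¹) := by
      have := h4.unique (by
        convert h3 using 2 with n
        rw [map_smul, smul_smul, pow_succ', pow_succ' T]
        rfl)
      simpa using this
    rw [map_neg, map_smul, ← h5, smul_neg, smul_smul, mul_inv_cancel₀ hm0, one_smul]
    abel

theorem localSpecRad_le_of_solution {H : Type*} [NormedAddCommGroup H] [InnerProductSpace ℂ H]
    [CompleteSpace H]
    (A : ℕ → (H →L[ℂ] H)ˣ)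
    (S : lp (fun _ : ℕ => H) 2 →L[ℂ] lp (fun _ : ℕ => H) 2)
    (hS0 : ∀ x : lp (fun _ : ℕ => H) 2, S x 0 = 0)
    (hS : ∀ (x : lp (fun _ : ℕ => H) 2) (n : ℕ), S x (n + 1) = (A n : H →L[ℂ] H) (x n))
    (x : H) (hx : x ≠ 0) (m : ℂ) (y : lp (fun _ : ℕ => H) 2)
    (hy : S y - m • y = lp.single 2 0 x) :
    m ≠ 0 ∧ localSpecRad S (lp.single 2 0 x) ≤ (‖m‖₊ : ℝ≥0∞) := by
  have hc : ∀ n, S y n - m • y n = (lp.single 2 0 x : lp (fun _ : ℕ => H) 2) n := by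
    intro n
    rw [← hy]
    rfl
  have hc0 : -(m • y 0) = x := by
    have := hc 0
    rw [hS0, lp.single_apply_self] at this
    simpa using this
  have hcs : ∀ n, (A n : H →L[ℂ] H) (y n) = m • y (n + 1) := by
    intro n
    have := hc (n + 1)
    rw [hS, lp.single_apply_ne _ _ _ (Nat.succ_ne_zero n)] at this
    exact sub_eq_zero.1 this
  have hm : m ≠ 0 := by
    rintro rfl
    apply hx
    simpa using hc0.symm
  refine ⟨hm, ?_⟩
  have hsingle : ∀ (n : ℕ) (z : H), S (lp.single 2 n z) =
      lp.single 2 (n + 1) ((A n : H →L[ℂ] H) z) := by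
    intro n z
    apply lp.ext
    funext k
    rcases k with _ | k
    · rw [hS0, lp.single_apply_ne _ _ _ (Nat.succ_ne_zero n).symm]
    · rw [hS]
      by_cases hk : k = n
      · subst hk
        rw [lp.single_apply_self, lp.single_apply_self]
      · rw [lp.single_apply_ne _ _ _ hk, lp.single_apply_ne _ _ _ (by omega), map_zero]
  have horb : ∀ n : ℕ, (S ^ n) (lp.single 2 0 x) = lp.single 2 n (-(m ^ (n + 1) • y n)) := by
    intro n
    induction n with
    | zero => simp [hc0]
    | succ n ih =>
      rw [pow_succ', ContinuousLinearMap.mul_apply, ih, hsingle, map_neg, map_smul, hcs,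
        smul_smul, ← pow_succ]
  have hr : ((‖m‖₊⁻¹ : NNReal) : ℝ≥0∞) ≤ (orbSeries S (lp.single 2 0 x)).radius := by
    apply FormalMultilinearSeries.le_radius_of_bound _ (‖m‖ * ‖y‖)
    intro n
    have h1 : ‖orbSeries S (lp.single 2 0 x) n‖ = ‖m‖ ^ (n + 1) * ‖y n‖ := by
      rw [orbSeries, ContinuousMultilinearMap.norm_mkPiRing, horb,
        lp.norm_single (by norm_num), norm_neg, norm_smul, norm_pow]
    have h2 : ‖y n‖ ≤ ‖y‖ := lp.norm_apply_le_norm (by norm_num) y n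
    have hm' : ‖m‖ ≠ 0 := norm_ne_zero_iff.2 hm
    rw [h1]
    calc _ = ‖m‖ * ‖y n‖ := by
          push_cast
          rw [inv_pow, pow_succ]
          have := pow_ne_zero n hm'
          generalize ‖m‖ ^ n = a at *
          field_simp
      _ ≤ _ := by gcongr
  rw [orbSeries_radius, ENNReal.coe_inv (by simpa using hm)] at hr
  exact ENNReal.inv_le_inv.1 hr

theorem stmt15 {H : Type*} [NormedAddCommGroup H] [InnerProductSpace ℂ H] [CompleteSpace H]
    (A : ℕ → (H →L[ℂ] H)ˣ)
    (hbdd : ∃ C : ℝ, ∀ n, ‖(A n : H →L[ℂ] H)‖ ≤ C)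
    (S : lp (fun _ : ℕ => H) 2 →L[ℂ] lp (fun _ : ℕ => H) 2)
    (hS0 : ∀ x : lp (fun _ : ℕ => H) 2, S x 0 = 0)
    (hS : ∀ (x : lp (fun _ : ℕ => H) 2) (n : ℕ), S x (n + 1) = (A n : H →L[ℂ] H) (x n)) :
    ∀ x : H, x ≠ 0 →
      localSpectrum S (lp.single 2 0 x) =
        {l : ℂ | (‖l‖₊ : ℝ≥0∞) ≤ localSpecRad S (lp.single 2 0 x)} := by
  intro x hx
  ext l
  rw [localSpectrum, Set.mem_compl_iff, Set.mem_setOf_eq]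
  constructor
  · intro h
    by_contra hlt
    exact h (mem_localResolventSet_of_lt S _ l (not_le.1 hlt))
  · rintro h ⟨U, hU, hlU, f, -, hf⟩
    have hl0 := (localSpecRad_le_of_solution A S hS0 hS x hx l (f l) (hf l hlU)).1
    have hcont : Tendsto (fun t : ℝ => (t : ℂ) * l) (𝓝[<] 1) (𝓝 l) := by
      have : Continuous (fun t : ℝ => (t : ℂ) * l) := by fun_prop
      have h2 := (this.tendsto 1).mono_left (nhdsWithin_le_nhds (s := Set.Iio 1))
      simpa using h2
    have hev : ∀ᶠ t : ℝ in 𝓝[<] 1, 0 < t :=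
      nhdsWithin_le_nhds (lt_mem_nhds one_pos)
    obtain ⟨t, htU, ht0, ht1⟩ :=
      ((hcont.eventually (hU.mem_nhds hlU)).and (hev.and self_mem_nhdsWithin)).exists
    have h3 := h.trans (localSpecRad_le_of_solution A S hS0 hS x hx _ _ (hf _ htU)).2
    have h4 : ‖l‖ ≤ ‖(t : ℂ) * l‖ := by exact_mod_cast h3
    rw [norm_mul, Complex.norm_real, Real.norm_of_nonneg ht0.le] at h4
    have h5 : 0 < ‖l‖ := norm_pos_iff.2 hl0
    have h6 : t < 1 := ht1
    nlinarith
end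
end
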